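/- arXiv:1910.03267 — 2 statements merged into one kernel-verified Lean document; each statement's English description precedes it below -/
import Mathlib

section
/- Let g ∈ C^∞(ℂ, ℂ), s > 1/2, and R > 0. There exists a constant α(g,R) > 0, nondecreasing in R, such that for all v, w in the ball B_R^s = {u ∈ H^s : ‖u‖_s ≤ R} one has ‖g(v) - g(w)‖_s ≤ α(g,R) ‖v - w‖_s. -/
open scoped Real

/-- H^s norm squared summand on the periodic interval of length `T`. -/
noncomputable def sobolevSummand (T : ℝ) [hT : Fact (0 < T)] (s : ℝ)
    (f : AddCircle T → ℂ) (l : ℤ) : ℝ :=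
  (1 + (2*π*l/T)^2) ^ s * ‖fourierCoeff f l‖^2

/-!
On the range of the functions in a ball of `H^s` one may replace `g` by a Schwartz function `G`, and
then `g ∘ v = ∫ 𝓕 G(ξ) e_ξ(v) dξ` with the plane waves `e_ξ(v) = exp (2πi⟪ξ, v⟫)`. As `𝓕 G` decays
rapidly, everything reduces to a bound for `‖e_ξ(v)‖_s` that grows polynomially in `ξ`, whereas the
algebra property of `H^s` alone gives an exponential one. Multiplication by a unimodular function
`E` preserves the `L²` norm, and its commutator with the weight `⟨l⟩^s` is of order `s - θ`. Hence
`‖E ^ (n + 1)‖_s` exceeds `‖E ^ n‖_s` only by a term of lower order, which interpolation with `L²`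
absorbs; iterating over the `n ≈ |ξ|` factors `E = e_{ξ/n}(v)` gives a power of `n`. Differences of
plane waves follow from `e_ξ(v) - e_ξ(u) = e_ξ(u) (e_ξ(v - u) - 1)` and
`E ^ n - 1 = (∑ j < n, E ^ j) (E - 1)`.
-/

open scoped ENNReal FourierTransform SchwartzMap

open MeasureTheory Filter Topology AddCircle

section Minkowski

variable {α β : Type*} [MeasurableSpace α] [MeasurableSpace β] {μ : Measure β} {ν : Measure α}

theorem lintegral_le_of_forall_le_of_ne_top [SigmaFinite ν] {f : α → ℝ≥0∞} (hf : Measurable f)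
    {C : ℝ≥0∞} (h : ∀ g : α → ℝ≥0∞, Measurable g → g ≤ f → ∫⁻ x, g x ∂ν ≠ ∞ → ∫⁻ x, g x ∂ν ≤ C) :
    ∫⁻ x, f x ∂ν ≤ C := by
  refine lintegral_le_of_forall_fin_meas_le C fun s hs hs_top => ?_
  have hsup (x : α) : f x = ⨆ n : ℕ, min (f x) n := by
    rw [← inf_iSup_eq, ENNReal.iSup_natCast, inf_top_eq]
  have hmono : Monotone fun (n : ℕ) x => min (f x) n := fun m n hmn x => by dsimp only; gcongr
  rw [lintegral_congr hsup, lintegral_iSup (fun n => hf.min measurable_const) hmono]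
  refine iSup_le fun n => ?_
  have htop : ∫⁻ x in s, min (f x) n ∂ν ≠ ∞ := by
    refine ((lintegral_mono fun x => min_le_right (f x) n).trans_lt ?_).ne
    rw [setLIntegral_const]
    finiteness
  rw [← lintegral_indicator hs] at htop ⊢
  exact h _ ((hf.min measurable_const).indicator hs)
    (Set.indicator_le fun x _ => min_le_left _ _) htop

theorem lintegral_rpow_le_of_le_lintegral [SFinite μ] [SFinite ν] {p : ℝ} (hp : 1 < p)
    {F : β → α → ℝ≥0∞} (hF : Measurable (Function.uncurry F)) {G : α → ℝ≥0∞} (hG : Measurable G)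
    (hGF : ∀ x, G x ≤ ∫⁻ y, F y x ∂μ) (hG_top : ∫⁻ x, G x ^ p ∂ν ≠ ∞) :
    (∫⁻ x, G x ^ p ∂ν) ^ (1 / p) ≤ ∫⁻ y, (∫⁻ x, F y x ^ p ∂ν) ^ (1 / p) ∂μ := by
  set I := ∫⁻ x, G x ^ p ∂ν with hI
  set S := ∫⁻ y, (∫⁻ x, F y x ^ p ∂ν) ^ (1 / p) ∂μ
  have hpq : p.HolderConjugate (p / (p - 1)) := Real.HolderConjugate.conjExponent hp
  have holder (y : β) :
      ∫⁻ x, F y x * G x ^ (p - 1) ∂ν ≤ (∫⁻ x, F y x ^ p ∂ν) ^ (1 / p) *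
        I ^ (1 / (p / (p - 1))) := by
    refine (ENNReal.lintegral_mul_le_Lp_mul_Lq ν hpq hF.of_uncurry_left.aemeasurable
      (hG.pow_const _).aemeasurable).trans_eq ?_
    simp only [← ENNReal.rpow_mul, mul_div_cancel₀ p (sub_pos.2 hp).ne', hI]
  have key : I ≤ S * I ^ (1 / (p / (p - 1))) := calc
    I = ∫⁻ x, G x * G x ^ (p - 1) ∂ν := lintegral_congr fun x => by
      conv_lhs => rw [← add_sub_cancel 1 p]
      rw [ENNReal.rpow_add_of_nonneg _ _ zero_le_one (sub_pos.2 hp).le, ENNReal.rpow_one]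
    _ ≤ ∫⁻ x, (∫⁻ y, F y x ∂μ) * G x ^ (p - 1) ∂ν := by gcongr with x; exact hGF x
    _ = ∫⁻ x, ∫⁻ y, F y x * G x ^ (p - 1) ∂μ ∂ν := by
      simp only [lintegral_mul_const _ hF.of_uncurry_right]
    _ = ∫⁻ y, ∫⁻ x, F y x * G x ^ (p - 1) ∂ν ∂μ :=
      (lintegral_lintegral_swap (by fun_prop)).symm
    _ ≤ ∫⁻ y, (∫⁻ x, F y x ^ p ∂ν) ^ (1 / p) * I ^ (1 / (p / (p - 1))) ∂μ :=
      lintegral_mono holder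
    _ = S * I ^ (1 / (p / (p - 1))) := lintegral_mul_const'' _ (by fun_prop)
  rcases eq_or_ne I 0 with h0 | h0
  · simp [h0, hpq.pos]
  · have hexp : I = I ^ (1 / p) * I ^ (1 / (p / (p - 1))) := by
      rw [← ENNReal.rpow_add _ _ h0 hG_top, one_div, one_div, hpq.inv_add_inv_eq_one,
        ENNReal.rpow_one]
    refine (ENNReal.mul_le_mul_iff_left ?_ ?_).1 (hexp.symm.trans_le key)
    · exact (ENNReal.rpow_pos (pos_iff_ne_zero.2 h0) hG_top).ne'
    · exact ENNReal.rpow_ne_top_of_nonneg (one_div_nonneg.2 hpq.symm.nonneg) hG_top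

theorem eLpNorm_lintegral_le [SFinite μ] [SigmaFinite ν] {p : ℝ≥0∞} (hp : 1 ≤ p) (hp_top : p ≠ ∞)
    {F : β → α → ℝ≥0∞} (hF : Measurable (Function.uncurry F)) :
    eLpNorm (fun x => ∫⁻ y, F y x ∂μ) p ν ≤ ∫⁻ y, eLpNorm (F y) p ν ∂μ := by
  rcases hp.eq_or_lt with rfl | hp1
  · simp only [eLpNorm_one_eq_lintegral_enorm, enorm_eq_self]
    exact (lintegral_lintegral_swap hF.aemeasurable).ge
  have hp0 : p ≠ 0 := (zero_lt_one.trans hp1).ne'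
  have hr : 1 < p.toReal := ENNReal.toReal_lt_toReal ENNReal.one_ne_top hp_top |>.2 hp1
  have hr0 : 0 < p.toReal := zero_lt_one.trans hr
  simp only [eLpNorm_eq_lintegral_rpow_enorm_toReal hp0 hp_top, enorm_eq_self]
  rw [one_div, ENNReal.rpow_inv_le_iff hr0]
  refine lintegral_le_of_forall_le_of_ne_top (hF.lintegral_prod_left'.pow_const _)
    fun g hg hgF hg_top => ?_
  have hroot (x : α) : (g x ^ (1 / p.toReal)) ^ p.toReal = g x := by
    rw [one_div, ENNReal.rpow_inv_rpow hr0.ne']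
  have hle := lintegral_rpow_le_of_le_lintegral hr hF (hg.pow_const (1 / p.toReal))
    (fun x => by rw [one_div, ENNReal.rpow_inv_le_iff hr0]; exact hgF x)
    (by simpa only [hroot] using hg_top)
  simp only [hroot] at hle
  rwa [one_div, ENNReal.rpow_inv_le_iff hr0] at hle

theorem eLpNorm_ennreal_const_mul {p : ℝ≥0∞} (hp : p ≠ 0) (hp_top : p ≠ ∞) (c : ℝ≥0∞)
    {f : α → ℝ≥0∞} (hf : Measurable f) :
    eLpNorm (fun x => c * f x) p ν = c * eLpNorm f p ν := by
  have hp' : 0 < p.toReal := ENNReal.toReal_pos hp hp_top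
  simp only [eLpNorm_eq_lintegral_rpow_enorm_toReal hp hp_top, enorm_eq_self,
    ENNReal.mul_rpow_of_nonneg _ _ hp'.le]
  rw [lintegral_const_mul _ (hf.pow_const _), ENNReal.mul_rpow_of_nonneg _ _ (by positivity),
    one_div, ENNReal.rpow_rpow_inv hp'.ne']

theorem eLpNorm_lconvolution_le {G : Type*} [AddGroup G] [MeasurableSpace G] [MeasurableAdd₂ G]
    [MeasurableNeg G] {μ : Measure G} [SigmaFinite μ] [μ.IsAddLeftInvariant]
    {p : ℝ≥0∞} (hp : 1 ≤ p) (hp_top : p ≠ ∞)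
    {f g : G → ℝ≥0∞} (hf : Measurable f) (hg : Measurable g) :
    eLpNorm (f ⋆ₗ[μ] g) p μ ≤ (∫⁻ x, f x ∂μ) * eLpNorm g p μ := by
  have htranslate (y : G) : eLpNorm (fun x => f y * g (-y + x)) p μ = f y * eLpNorm g p μ := by
    rw [eLpNorm_ennreal_const_mul (by positivity) hp_top _ (by fun_prop)]
    exact congrArg _ (eLpNorm_comp_measurePreserving hg.aestronglyMeasurable
      (measurePreserving_add_left μ (-y)))
  calc eLpNorm (f ⋆ₗ[μ] g) p μ
      ≤ ∫⁻ y, eLpNorm (fun x => f y * g (-y + x)) p μ ∂μ :=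
        eLpNorm_lintegral_le hp hp_top (by fun_prop)
    _ = (∫⁻ x, f x ∂μ) * eLpNorm g p μ := by simp only [htranslate, lintegral_mul_const _ hf]

end Minkowski

theorem one_sub_rpow_le {b s : ℝ} (hb : 0 ≤ b) (hb' : b ≤ 1) :
    1 - b ^ s ≤ max 1 s * (1 - b) := by
  rcases le_total 1 s with h | h
  · have bernoulli := one_add_mul_self_le_rpow_one_add (s := b - 1) (by linarith) h
    rw [add_sub_cancel] at bernoulli
    rw [max_eq_right h]
    linarith
  · rw [max_eq_left h]
    linarith [Real.self_le_rpow_of_le_one hb hb' h]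

theorem abs_rpow_sub_rpow_le {x y s θ : ℝ} (hx : 0 < x) (hy : 0 < y) (hs : 0 ≤ s) (hθ : θ ≤ 1) :
    |x ^ s - y ^ s| ≤ max 1 s * (|x - y| ^ θ * max x y ^ (s - θ)) := by
  wlog hyx : y ≤ x generalizing x y
  · simpa only [abs_sub_comm, max_comm] using this hy hx (le_of_not_ge hyx)
  have hratio : y / x ≤ 1 := (div_le_one hx).2 hyx
  have hratio0 : 0 ≤ y / x := by positivity
  rw [abs_of_nonneg (sub_nonneg.2 (Real.rpow_le_rpow hy.le hyx hs)),
    abs_of_nonneg (sub_nonneg.2 hyx), max_eq_left hyx]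
  calc x ^ s - y ^ s
      = x ^ s * (1 - (y / x) ^ s) := by
        rw [Real.div_rpow hy.le hx.le]; field_simp
    _ ≤ x ^ s * (max 1 s * (1 - y / x)) := by gcongr; exact one_sub_rpow_le hratio0 hratio
    _ ≤ x ^ s * (max 1 s * (1 - y / x) ^ θ) := by
        gcongr
        exact Real.self_le_rpow_of_le_one (sub_nonneg.2 hratio) (by linarith) hθ
    _ = max 1 s * ((x - y) ^ θ * x ^ (s - θ)) := by
        rw [one_sub_div hx.ne', Real.div_rpow (sub_nonneg.2 hyx) hx.le, Real.rpow_sub hx]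
        ring

theorem add_rpow_le_two_rpow_mul {x y r : ℝ} (hx : 0 ≤ x) (hy : 0 ≤ y) (hr : 0 ≤ r) :
    (x + y) ^ r ≤ 2 ^ r * (x ^ r + y ^ r) := calc
  (x + y) ^ r ≤ (2 * max x y) ^ r := by
    gcongr; linarith [le_max_left x y, le_max_right x y]
  _ = 2 ^ r * max (x ^ r) (y ^ r) := by
    rw [Real.mul_rpow zero_le_two (hx.trans (le_max_left x y)),
      (Real.monotoneOn_rpow_Ici_of_exponent_nonneg hr).map_max hx hy]
  _ ≤ 2 ^ r * (x ^ r + y ^ r) := by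
    gcongr; exact max_le_add_of_nonneg (by positivity) (by positivity)

theorem abs_rpow_sub_rpow_le_of_abs_sub_le {x y z s θ : ℝ} (hx : 0 < x) (hy : 0 < y)
    (hxyz : |x - y| ≤ z) (hθ0 : 0 ≤ θ) (hθ : θ ≤ 1) (hθs : θ ≤ s) :
    |x ^ s - y ^ s| ≤ max 1 s * 2 ^ (s - θ) * (z ^ s + z ^ θ * y ^ (s - θ)) := by
  have hz : 0 ≤ z := (abs_nonneg _).trans hxyz
  have hmax : max x y ≤ z + y := max_le (by linarith [le_abs_self (x - y)]) (by linarith)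
  have hr : 0 ≤ s - θ := sub_nonneg.2 hθs
  calc |x ^ s - y ^ s|
      ≤ max 1 s * (|x - y| ^ θ * max x y ^ (s - θ)) :=
        abs_rpow_sub_rpow_le hx hy (hθ0.trans hθs) hθ
    _ ≤ max 1 s * (z ^ θ * (z + y) ^ (s - θ)) := by gcongr
    _ ≤ max 1 s * (z ^ θ * (2 ^ (s - θ) * (z ^ (s - θ) + y ^ (s - θ)))) := by
        gcongr; exact add_rpow_le_two_rpow_mul hz hy.le hr
    _ = max 1 s * 2 ^ (s - θ) * (z ^ s + z ^ θ * y ^ (s - θ)) := by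
        conv_rhs => rw [← add_sub_cancel θ s, Real.rpow_add_of_nonneg hz hθ0 hr, add_sub_cancel]
        ring

theorem rpow_sub_le_inv_mul_add {x a s θ : ℝ} (hx : 0 < x) (ha : 0 < a) (hθ : 0 < θ) (hθs : θ ≤ s) :
    x ^ (s - θ) ≤ a⁻¹ * x ^ s + a ^ ((s - θ) / θ) := by
  rcases le_total a (x ^ θ) with h | h
  · have : x ^ (s - θ) ≤ a⁻¹ * x ^ s := by
      rw [le_inv_mul_iff₀ ha]
      calc a * x ^ (s - θ) ≤ x ^ θ * x ^ (s - θ) := by gcongr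
        _ = x ^ s := by rw [← Real.rpow_add hx, add_sub_cancel]
    exact this.trans (le_add_of_nonneg_right (by positivity))
  · have : x ^ (s - θ) ≤ a ^ ((s - θ) / θ) := by
      have hexp : 0 ≤ (s - θ) / θ := div_nonneg (sub_nonneg.2 hθs) hθ.le
      calc x ^ (s - θ) = (x ^ θ) ^ ((s - θ) / θ) := by
            rw [← Real.rpow_mul hx.le, mul_div_cancel₀ _ hθ.ne']
        _ ≤ a ^ ((s - θ) / θ) := Real.rpow_le_rpow (by positivity) h hexp
    exact this.trans (le_add_of_nonneg_left (by positivity))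

section JapaneseBracket

/-- The Japanese bracket `⟨l⟩` of the frequency `2πl/T`; the weight in `sobolevSummand T s` is
`⟨l⟩ ^ (2 * s)`. -/
noncomputable def japaneseBracket (T : ℝ) (l : ℤ) : ℝ := √(1 + (2 * π * l / T) ^ 2)

variable (T : ℝ) (k l : ℤ)

theorem one_le_japaneseBracket : 1 ≤ japaneseBracket T l :=
  Real.one_le_sqrt.2 (le_add_of_nonneg_right (sq_nonneg _))

theorem japaneseBracket_pos : 0 < japaneseBracket T l :=
  zero_lt_one.trans_le (one_le_japaneseBracket T l)

theorem japaneseBracket_sq : japaneseBracket T l ^ 2 = 1 + (2 * π * l / T) ^ 2 :=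
  Real.sq_sqrt (by positivity)

@[simp]
theorem japaneseBracket_zero : japaneseBracket T 0 = 1 := by simp [japaneseBracket]

@[simp]
theorem japaneseBracket_neg : japaneseBracket T (-l) = japaneseBracket T l := by
  simp [japaneseBracket, neg_div]

theorem abs_le_japaneseBracket : |2 * π * l / T| ≤ japaneseBracket T l :=
  Real.abs_le_sqrt (le_add_of_nonneg_left zero_le_one)

theorem japaneseBracket_add_le :
    japaneseBracket T (k + l) ≤ japaneseBracket T k + japaneseBracket T l := by
  have hk := japaneseBracket_sq T k
  have hl := japaneseBracket_sq T l
  have hprod : 2 * π * k / T * (2 * π * l / T) ≤ japaneseBracket T k * japaneseBracket T l :=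
    calc _ ≤ |2 * π * k / T| * |2 * π * l / T| := (le_abs_self _).trans_eq (abs_mul _ _)
      _ ≤ _ := mul_le_mul (abs_le_japaneseBracket T k) (abs_le_japaneseBracket T l)
        (abs_nonneg _) (japaneseBracket_pos T k).le
  refine Real.sqrt_le_iff.2
    ⟨(add_pos (japaneseBracket_pos T k) (japaneseBracket_pos T l)).le, ?_⟩
  have hfreq : 2 * π * ((k + l : ℤ) : ℝ) / T = 2 * π * k / T + 2 * π * l / T := by
    push_cast; ring
  rw [hfreq]
  nlinarith

theorem abs_japaneseBracket_sub_le :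
    |japaneseBracket T l - japaneseBracket T k| ≤ japaneseBracket T (-k + l) := by
  rw [abs_sub_le_iff, sub_le_iff_le_add', sub_le_iff_le_add']
  constructor
  · simpa using japaneseBracket_add_le T k (-k + l)
  · have h := japaneseBracket_add_le T l (-(-k + l))
    rwa [japaneseBracket_neg, neg_add_rev, neg_neg, add_neg_cancel_left] at h

/-- The constant of the embedding of `H^(r + t)` into the functions whose Fourier coefficients are
summable against `⟨l⟩ ^ r`; it is finite for `t > 1 / 2`. -/
noncomputable def embeddingConst (t : ℝ) : ℝ≥0∞ :=
  eLpNorm (fun l => japaneseBracket T l ^ (-t)) 2 Measure.count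

variable {T}

theorem memLp_japaneseBracket_rpow_neg (hT : T ≠ 0) {r : ℝ} (hr : 1 / 2 < r) :
    MemLp (fun l => japaneseBracket T l ^ (-r)) 2 Measure.count := by
  rw [memLp_two_iff_integrable_sq .of_discrete, integrable_count_iff]
  have hfreq : 0 < |2 * π / T| := by positivity
  refine .of_norm_bounded_eventually
    ((Real.summable_abs_int_rpow (b := 2 * r) (by linarith)).mul_left (|2 * π / T| ^ (-(2 * r)))) ?_
  filter_upwards [(Set.finite_singleton (0 : ℤ)).compl_mem_cofinite] with l hl
  have hl0 : (0 : ℝ) < |(l : ℝ)| := by simpa using hl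
  have hpos := japaneseBracket_pos T l
  rw [norm_norm, Real.norm_of_nonneg (by positivity), ← Real.rpow_natCast, ← Real.rpow_mul hpos.le,
    ← Real.mul_rpow hfreq.le hl0.le, ← abs_mul, Nat.cast_ofNat, neg_mul, mul_comm r 2]
  refine Real.rpow_le_rpow_of_nonpos (abs_pos.2 ?_) ?_ (by linarith)
  · exact mul_ne_zero (by positivity) (by simpa using hl)
  · simpa only [div_mul_eq_mul_div] using abs_le_japaneseBracket T l

theorem embeddingConst_ne_top (hT : T ≠ 0) {t : ℝ} (ht : 1 / 2 < t) : embeddingConst T t ≠ ∞ :=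
  (memLp_japaneseBracket_rpow_neg hT ht).eLpNorm_ne_top

theorem one_le_embeddingConst (t : ℝ) : 1 ≤ embeddingConst T t := by
  simpa [embeddingConst] using
    enorm_le_eLpNorm_count (fun l => japaneseBracket T l ^ (-t)) 0 two_ne_zero

end JapaneseBracket

section FourierCoeff

theorem enorm_fourier_apply {T : ℝ} (n : ℤ) (x : AddCircle T) : ‖fourier n x‖ₑ = 1 := by
  rw [fourier_apply, ← ofReal_norm, Circle.norm_coe, ENNReal.ofReal_one]

variable {T : ℝ} [hT : Fact (0 < T)]

theorem eLpNorm_two_count {ι E : Type*} [MeasurableSpace ι] [MeasurableSingletonClass ι]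
    [NormedAddCommGroup E] (a : ι → E) :
    eLpNorm a 2 Measure.count = (∑' i, ENNReal.ofReal (‖a i‖ ^ 2)) ^ (1 / 2 : ℝ) := by
  simp [eLpNorm_eq_lintegral_rpow_enorm_toReal two_ne_zero ENNReal.ofNat_ne_top, lintegral_count,
    ENNReal.ofReal_pow]

theorem eLpNorm_fourierCoeff {f : AddCircle T → ℂ} (hf : MemLp f 2 haarAddCircle) :
    eLpNorm (fourierCoeff f) 2 Measure.count = eLpNorm f 2 haarAddCircle := by
  have hparseval := hasSum_sq_fourierCoeff hf.toLp
  simp only [fourierCoeff_congr_ae hf.coeFn_toLp] at hparseval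
  rw [eLpNorm_two_count, ← ENNReal.ofReal_tsum_of_nonneg (fun _ => sq_nonneg _) hparseval.summable,
    hparseval.tsum_eq, hf.eLpNorm_eq_integral_rpow_norm two_ne_zero ENNReal.ofNat_ne_top,
    integral_congr_ae (g := fun t => ‖f t‖ ^ 2) (hf.coeFn_toLp.mono fun t ht => by simp only [ht]),
    ENNReal.ofReal_rpow_of_nonneg (by positivity) (by positivity)]
  simp

/-- The `n`-th Fourier coefficient as a continuous functional on continuous functions. -/
noncomputable def fourierCoeffCLM (n : ℤ) : C(AddCircle T, ℂ) →L[ℂ] ℂ :=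
  innerSL ℂ (fourierLp 2 n) ∘L ContinuousMap.toLp 2 haarAddCircle ℂ

@[simp]
theorem fourierCoeffCLM_apply (n : ℤ) (f : C(AddCircle T, ℂ)) :
    fourierCoeffCLM n f = fourierCoeff f n := by
  rw [← fourierCoeff_toLp, ← fourierBasis_repr, HilbertBasis.repr_apply_apply, coe_fourierBasis]
  rfl

theorem fourierCoeff_mul_fourier (f : AddCircle T → ℂ) (k l : ℤ) :
    fourierCoeff (f * ⇑(fourier k)) l = fourierCoeff f (-k + l) := by
  refine integral_congr_ae (.of_forall fun t => ?_)
  simp only [Pi.mul_apply, smul_eq_mul, neg_add, neg_neg, fourier_add]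
  ring

theorem fourierCoeff_star (f : AddCircle T → ℂ) (l : ℤ) :
    fourierCoeff (star f) l = star (fourierCoeff f (-l)) := by
  simp only [fourierCoeff, ← starRingEnd_apply, ← integral_conj]
  refine integral_congr_ae (.of_forall fun t => ?_)
  simp

theorem hasSum_fourierCoeff_mul (f : C(AddCircle T, ℂ)) {u : C(AddCircle T, ℂ)}
    (hu : Summable (fourierCoeff u)) (l : ℤ) :
    HasSum (fun k => fourierCoeff u k * fourierCoeff f (-k + l))
      (fourierCoeff (f * u) l) := by
  have h := ((hasSum_fourier_series_of_summable hu).mul_left f).mapL (fourierCoeffCLM l)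
  simpa [fourierCoeff_mul_fourier] using h

theorem fourierCoeff_tsum_smul_fourier {a : ℤ → ℂ} (ha : Summable a) (l : ℤ) :
    fourierCoeff (∑' k, a k • fourier k : C(AddCircle T, ℂ)) l = a l := by
  have hsum : Summable fun k => a k • (fourier k : C(AddCircle T, ℂ)) :=
    .of_norm (by simpa [norm_smul, fourier_norm] using ha.norm)
  rw [← fourierCoeffCLM_apply, ContinuousLinearMap.map_tsum _ hsum,
    tsum_eq_single l fun k hk => by simp [fourierCoeff_fourier, hk.symm]]
  simp [fourierCoeff_fourier]

end FourierCoeff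

section SobolevNorm

variable {T : ℝ} [hT : Fact (0 < T)]

/-- The coefficients `⟨l⟩ ^ r * f̂(l)` of the Bessel potential of order `r` of `f`. -/
noncomputable def weightedCoeff (r : ℝ) (f : C(AddCircle T, ℂ)) (l : ℤ) : ℂ :=
  japaneseBracket T l ^ r • fourierCoeff f l

/-- The norm of `H^s`, with values in `ℝ≥0∞` so that it is defined (as `∞`) also for continuous
functions that do not belong to `H^s`. -/
noncomputable def sobolevNorm (s : ℝ) (f : C(AddCircle T, ℂ)) : ℝ≥0∞ :=
  eLpNorm (weightedCoeff s f) 2 Measure.count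

theorem enorm_weightedCoeff (r : ℝ) (f : C(AddCircle T, ℂ)) (l : ℤ) :
    ‖weightedCoeff r f l‖ₑ = ENNReal.ofReal (japaneseBracket T l ^ r) * ‖fourierCoeff f l‖ₑ := by
  rw [weightedCoeff, enorm_smul,
    Real.enorm_eq_ofReal (Real.rpow_nonneg (japaneseBracket_pos T l).le r)]

theorem weightedCoeff_zero_exponent (f : C(AddCircle T, ℂ)) :
    weightedCoeff 0 f = fourierCoeff f := by
  ext l; simp [weightedCoeff]

theorem weightedCoeff_add (r : ℝ) (f u : C(AddCircle T, ℂ)) :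
    weightedCoeff r (f + u) = weightedCoeff r f + weightedCoeff r u := by
  ext l
  simp only [weightedCoeff, ← fourierCoeffCLM_apply, map_add, smul_add, Pi.add_apply]

theorem weightedCoeff_smul (r : ℝ) (c : ℂ) (f : C(AddCircle T, ℂ)) :
    weightedCoeff r (c • f) = c • weightedCoeff r f := by
  ext l
  simp only [weightedCoeff, ← fourierCoeffCLM_apply, map_smul, Pi.smul_apply, smul_comm c]

theorem sobolevNorm_add_le (s : ℝ) (f u : C(AddCircle T, ℂ)) :
    sobolevNorm s (f + u) ≤ sobolevNorm s f + sobolevNorm s u := by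
  simpa only [sobolevNorm, weightedCoeff_add] using
    eLpNorm_add_le .of_discrete .of_discrete one_le_two

@[simp]
theorem sobolevNorm_smul (s : ℝ) (c : ℂ) (f : C(AddCircle T, ℂ)) :
    sobolevNorm s (c • f) = ‖c‖ₑ * sobolevNorm s f := by
  rw [sobolevNorm, weightedCoeff_smul, eLpNorm_const_smul, sobolevNorm]

theorem sobolevNorm_sub_le (s : ℝ) (f u : C(AddCircle T, ℂ)) :
    sobolevNorm s (f - u) ≤ sobolevNorm s f + sobolevNorm s u := by
  have h := sobolevNorm_add_le s f ((-1 : ℂ) • u)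
  rwa [sobolevNorm_smul, enorm_neg, enorm_one, one_mul, neg_one_smul, ← sub_eq_add_neg] at h

@[simp]
theorem sobolevNorm_zero (s : ℝ) : sobolevNorm s (0 : C(AddCircle T, ℂ)) = 0 := by
  simpa using sobolevNorm_smul s 0 (0 : C(AddCircle T, ℂ))

theorem sobolevNorm_sum_le (s : ℝ) {ι : Type*} (F : Finset ι) (f : ι → C(AddCircle T, ℂ)) :
    sobolevNorm s (∑ i ∈ F, f i) ≤ ∑ i ∈ F, sobolevNorm s (f i) :=
  Finset.le_sum_of_subadditive _ (sobolevNorm_zero s).le (sobolevNorm_add_le s) F f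

@[simp]
theorem sobolevNorm_star (s : ℝ) (f : C(AddCircle T, ℂ)) :
    sobolevNorm s (star f) = sobolevNorm s f := by
  have hcoeff (l : ℤ) : ‖weightedCoeff s (star f) l‖ = ‖(weightedCoeff s f ∘ Equiv.neg ℤ) l‖ := by
    simp [weightedCoeff, ContinuousMap.coe_star, fourierCoeff_star]
  rw [sobolevNorm, eLpNorm_congr_norm_ae (.of_forall hcoeff), sobolevNorm]
  exact eLpNorm_comp_measurePreserving .of_discrete (Measure.measurePreserving_neg Measure.count)

theorem sobolevNorm_fourier (s : ℝ) (k : ℤ) :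
    sobolevNorm s (fourier k : C(AddCircle T, ℂ)) = ENNReal.ofReal (japaneseBracket T k ^ s) := by
  rw [sobolevNorm, eLpNorm_two_count, tsum_eq_single k fun l hl => by
    simp [weightedCoeff, fourierCoeff_fourier, hl]]
  have hpos : 0 ≤ japaneseBracket T k ^ s := Real.rpow_nonneg (japaneseBracket_pos T k).le s
  simp only [weightedCoeff, fourierCoeff_fourier, Pi.single_eq_same, norm_smul, norm_one, mul_one,
    Real.norm_of_nonneg hpos, ENNReal.ofReal_pow hpos]
  simpa using ENNReal.pow_rpow_inv_natCast two_ne_zero (ENNReal.ofReal (japaneseBracket T k ^ s))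

theorem sobolevNorm_one (s : ℝ) : sobolevNorm s (1 : C(AddCircle T, ℂ)) = 1 := by
  simpa [show (fourier 0 : C(AddCircle T, ℂ)) = 1 by ext; simp] using
    sobolevNorm_fourier (T := T) s 0

theorem isClosed_setOf_sobolevNorm_le (s : ℝ) (C : ℝ≥0∞) :
    IsClosed {f : C(AddCircle T, ℂ) | sobolevNorm s f ≤ C} := by
  refine IsSeqClosed.isClosed fun f u hf hlim => ?_
  have hcoeff (l : ℤ) :
      Tendsto (fun n => weightedCoeff s (f n) l) atTop (𝓝 (weightedCoeff s u l)) := by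
    simp only [weightedCoeff, ← fourierCoeffCLM_apply]
    exact (((fourierCoeffCLM l).continuous.tendsto u).comp hlim).const_smul _
  exact (Lp.eLpNorm_lim_le_liminf_eLpNorm (fun _ => .of_discrete) _ (.of_forall hcoeff)).trans
    (liminf_le_of_frequently_le' (.of_forall hf))

theorem sobolevNorm_zero_exponent (f : C(AddCircle T, ℂ)) :
    sobolevNorm 0 f = eLpNorm f 2 haarAddCircle := by
  rw [sobolevNorm, weightedCoeff_zero_exponent, eLpNorm_fourierCoeff]
  exact f.continuous.memLp_of_hasCompactSupport (.of_compactSpace f)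

theorem sobolevNorm_zero_mul_of_norm_eq_one {E : C(AddCircle T, ℂ)} (hE : ∀ x, ‖E x‖ = 1)
    (f : C(AddCircle T, ℂ)) : sobolevNorm 0 (E * f) = sobolevNorm 0 f := by
  rw [sobolevNorm_zero_exponent, sobolevNorm_zero_exponent]
  exact eLpNorm_congr_norm_ae (.of_forall fun x => by simp [hE])

end SobolevNorm

section Embedding

variable {T : ℝ} [hT : Fact (0 < T)]

theorem tsum_enorm_weightedCoeff_le (r t : ℝ) (f : C(AddCircle T, ℂ)) :
    ∑' l, ‖weightedCoeff r f l‖ₑ ≤ embeddingConst T t * sobolevNorm (r + t) f := by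
  have hfactor : weightedCoeff r f =
      (fun l => japaneseBracket T l ^ (-t)) • weightedCoeff (r + t) f := by
    ext l
    rw [Pi.smul_apply', weightedCoeff, weightedCoeff, smul_smul,
      ← Real.rpow_add (japaneseBracket_pos T l), neg_add_cancel_comm_assoc]
  rw [← lintegral_count, ← eLpNorm_one_eq_lintegral_enorm, hfactor]
  exact eLpNorm_smul_le_mul_eLpNorm .of_discrete .of_discrete

theorem tsum_enorm_fourierCoeff_le (s : ℝ) (f : C(AddCircle T, ℂ)) :
    ∑' l, ‖fourierCoeff f l‖ₑ ≤ embeddingConst T s * sobolevNorm s f := by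
  simpa [weightedCoeff_zero_exponent] using tsum_enorm_weightedCoeff_le 0 s f

theorem summable_fourierCoeff {s : ℝ} (hs : 1 / 2 < s) {f : C(AddCircle T, ℂ)}
    (hf : sobolevNorm s f ≠ ∞) : Summable (fourierCoeff f) :=
  .of_enorm ((tsum_enorm_fourierCoeff_le s f).trans_lt
    (ENNReal.mul_lt_top (embeddingConst_ne_top hT.out.ne' hs).lt_top hf.lt_top)).ne

theorem enorm_apply_le {s : ℝ} (hs : 1 / 2 < s) (f : C(AddCircle T, ℂ)) (x : AddCircle T) :
    ‖f x‖ₑ ≤ embeddingConst T s * sobolevNorm s f := by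
  rcases eq_or_ne (sobolevNorm s f) ∞ with htop | hf
  · simp [htop, ENNReal.mul_top (zero_lt_one.trans_le (one_le_embeddingConst s)).ne']
  · have hsum := has_pointwise_sum_fourier_series_of_summable (summable_fourierCoeff hs hf) x
    rw [← hsum.tsum_eq]
    refine (enorm_tsum_le_tsum_enorm).trans ?_
    simpa [enorm_smul, -fourier_apply, enorm_fourier_apply] using tsum_enorm_fourierCoeff_le s f

end Embedding

section Products

variable {T s θ : ℝ}

theorem eLpNorm_le_of_le_lconvolution_add {E : Type*} [NormedAddCommGroup E]
    {d a b a' b' : ℤ → E} {C : ℝ≥0∞}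
    (hd : ∀ l, ‖d l‖ₑ ≤ C * ∑' k, (‖a k‖ₑ * ‖b (-k + l)‖ₑ + ‖b' k‖ₑ * ‖a' (-k + l)‖ₑ)) :
    eLpNorm d 2 Measure.count ≤ C * ((∑' l, ‖a l‖ₑ) * eLpNorm b 2 Measure.count
      + (∑' l, ‖a' l‖ₑ) * eLpNorm b' 2 Measure.count) := by
  let conv (a b : ℤ → E) : ℤ → ℝ≥0∞ := (‖a ·‖ₑ) ⋆ₗ[Measure.count] (‖b ·‖ₑ)
  have young (a b : ℤ → E) : eLpNorm (conv a b) 2 Measure.count ≤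
      (∑' l, ‖a l‖ₑ) * eLpNorm b 2 Measure.count := by
    rw [← lintegral_count, ← eLpNorm_enorm b]
    exact eLpNorm_lconvolution_le (μ := (Measure.count : Measure ℤ)) one_le_two ENNReal.ofNat_ne_top
      .of_discrete .of_discrete
  calc eLpNorm d 2 Measure.count
      ≤ eLpNorm (fun l => C * (conv a b + conv a' b') l) 2 Measure.count :=
        eLpNorm_mono_enorm fun l => (hd l).trans_eq <| by
          simp only [enorm_eq_self, Pi.add_apply, conv, lconvolution_comm (f := (‖a' ·‖ₑ))]
          simp only [lconvolution_def, lintegral_count, ENNReal.tsum_add]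
    _ = C * eLpNorm (conv a b + conv a' b') 2 Measure.count :=
        eLpNorm_ennreal_const_mul two_ne_zero ENNReal.ofNat_ne_top C .of_discrete
    _ ≤ _ := by
        gcongr
        exact (eLpNorm_add_le .of_discrete .of_discrete one_le_two).trans
          (add_le_add (young a b) (young a' b'))

theorem japaneseBracket_rpow_le (T : ℝ) (k l : ℤ) {s : ℝ} (hs : 0 ≤ s) :
    japaneseBracket T l ^ s ≤
      2 ^ s * (japaneseBracket T (-k + l) ^ s + japaneseBracket T k ^ s) := by
  have hsub := japaneseBracket_add_le T (-k + l) k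
  rw [neg_add_cancel_comm] at hsub
  have hpos := japaneseBracket_pos T
  calc japaneseBracket T l ^ s
      ≤ (japaneseBracket T (-k + l) + japaneseBracket T k) ^ s := by
        gcongr; exact (hpos l).le
    _ ≤ _ := add_rpow_le_two_rpow_mul (hpos _).le (hpos k).le hs

theorem abs_japaneseBracket_rpow_sub_le (T : ℝ) (k l : ℤ) {s θ : ℝ} (hθ : 0 ≤ θ) (hθ1 : θ ≤ 1)
    (hθs : θ ≤ s) :
    |japaneseBracket T l ^ s - japaneseBracket T k ^ s| ≤ max 1 s * 2 ^ (s - θ) *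
      (japaneseBracket T (-k + l) ^ s +
        japaneseBracket T (-k + l) ^ θ * japaneseBracket T k ^ (s - θ)) :=
  abs_rpow_sub_rpow_le_of_abs_sub_le (japaneseBracket_pos T l) (japaneseBracket_pos T k)
    (abs_japaneseBracket_sub_le T k l) hθ hθ1 hθs

variable (T s) in
/-- A constant for the multiplicative inequality of the algebra `H^s`, `s > 1 / 2`. -/
noncomputable def algebraConst : ℝ≥0∞ := 2 * ENNReal.ofReal (2 ^ s) * embeddingConst T s

theorem algebraConst_ne_zero : algebraConst T s ≠ 0 := by
  have h2 : ENNReal.ofReal (2 ^ s) ≠ 0 := (ENNReal.ofReal_pos.2 (by positivity)).ne'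
  exact mul_ne_zero (mul_ne_zero two_ne_zero h2)
    (zero_lt_one.trans_le (one_le_embeddingConst s)).ne'

variable (T s θ) in
/-- The constant of the lower order term that appears when a unimodular function is moved across
the weight of `H^s` at the cost of a gain of `θ` derivatives. -/
noncomputable def commutatorConst : ℝ≥0∞ :=
  2 * ENNReal.ofReal (max 1 s * 2 ^ (s - θ)) * embeddingConst T (s - θ)

variable [hT : Fact (0 < T)]

theorem enorm_weightedCoeff_mul_le (hs : 0 ≤ s) (f : C(AddCircle T, ℂ)) {u : C(AddCircle T, ℂ)}
    (hu : Summable (fourierCoeff u)) (l : ℤ) :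
    ‖weightedCoeff s (f * u) l‖ₑ ≤ ENNReal.ofReal (2 ^ s) *
      ∑' k, (‖fourierCoeff u k‖ₑ * ‖weightedCoeff s f (-k + l)‖ₑ +
        ‖weightedCoeff s u k‖ₑ * ‖fourierCoeff f (-k + l)‖ₑ) := by
  have hsum := (hasSum_fourierCoeff_mul f hu l).const_smul (japaneseBracket T l ^ s)
  rw [weightedCoeff, ← hsum.tsum_eq, ← ENNReal.tsum_mul_left]
  refine enorm_tsum_le_tsum_enorm.trans (ENNReal.tsum_le_tsum fun k => ?_)
  have hpos (m : ℤ) : 0 ≤ japaneseBracket T m ^ s := Real.rpow_nonneg (japaneseBracket_pos T m).le s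
  rw [enorm_smul, enorm_mul, enorm_weightedCoeff, enorm_weightedCoeff,
    Real.enorm_of_nonneg (hpos l)]
  calc _ ≤ ENNReal.ofReal (2 ^ s * (japaneseBracket T (-k + l) ^ s + japaneseBracket T k ^ s)) *
        (‖fourierCoeff u k‖ₑ * ‖fourierCoeff f (-k + l)‖ₑ) := by
        gcongr; exact japaneseBracket_rpow_le T k l hs
    _ = _ := by
        rw [ENNReal.ofReal_mul (by positivity), ENNReal.ofReal_add (hpos _) (hpos _)]
        ring

theorem algebraConst_ne_top (hs : 1 / 2 < s) : algebraConst T s ≠ ∞ := by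
  have := embeddingConst_ne_top hT.out.ne' hs
  unfold algebraConst
  finiteness

theorem sobolevNorm_mul_le (hs : 1 / 2 < s) (f u : C(AddCircle T, ℂ)) :
    sobolevNorm s (f * u) ≤ algebraConst T s * sobolevNorm s f * sobolevNorm s u := by
  have key (f : C(AddCircle T, ℂ)) {u : C(AddCircle T, ℂ)} (hu : sobolevNorm s u ≠ ∞) :
      sobolevNorm s (f * u) ≤ algebraConst T s * sobolevNorm s f * sobolevNorm s u := calc
    _ ≤ ENNReal.ofReal (2 ^ s) * ((∑' l, ‖fourierCoeff u l‖ₑ) * sobolevNorm s f +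
          (∑' l, ‖fourierCoeff f l‖ₑ) * sobolevNorm s u) := by
        have hs0 : 0 ≤ s := by linarith
        exact eLpNorm_le_of_le_lconvolution_add
          (enorm_weightedCoeff_mul_le hs0 f (summable_fourierCoeff hs hu))
    _ ≤ ENNReal.ofReal (2 ^ s) * (embeddingConst T s * sobolevNorm s u * sobolevNorm s f +
          embeddingConst T s * sobolevNorm s f * sobolevNorm s u) := by
        gcongr <;> exact tsum_enorm_fourierCoeff_le s _
    _ = algebraConst T s * sobolevNorm s f * sobolevNorm s u := by rw [algebraConst]; ring
  rcases eq_or_ne (sobolevNorm s u) ∞ with hu | hu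
  · rcases eq_or_ne (sobolevNorm s f) ∞ with hf | hf
    · simp [hu, hf, ENNReal.mul_top, algebraConst_ne_zero]
    · simpa only [mul_comm u, mul_right_comm] using key u hf
  · exact key f hu

theorem enorm_weightedCoeff_mul_sub_fourierCoeff_mul_le (hθ : 0 ≤ θ) (hθ1 : θ ≤ 1) (hθs : θ ≤ s)
    (f : C(AddCircle T, ℂ)) {u q : C(AddCircle T, ℂ)} (hu : Summable (fourierCoeff u))
    (hq : Summable (fourierCoeff q)) (hqu : fourierCoeff q = weightedCoeff s u) (l : ℤ) :
    ‖weightedCoeff s (f * u) l - fourierCoeff (f * q) l‖ₑ ≤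
      ENNReal.ofReal (max 1 s * 2 ^ (s - θ)) *
        ∑' k, (‖fourierCoeff u k‖ₑ * ‖weightedCoeff s f (-k + l)‖ₑ +
          ‖weightedCoeff (s - θ) u k‖ₑ * ‖weightedCoeff θ f (-k + l)‖ₑ) := by
  have hsum := ((hasSum_fourierCoeff_mul f hu l).const_smul (japaneseBracket T l ^ s)).sub
    (hasSum_fourierCoeff_mul f hq l)
  rw [weightedCoeff, ← hsum.tsum_eq, ← ENNReal.tsum_mul_left]
  refine enorm_tsum_le_tsum_enorm.trans (ENNReal.tsum_le_tsum fun k => ?_)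
  have hpos (r : ℝ) (m : ℤ) : 0 ≤ japaneseBracket T m ^ r :=
    Real.rpow_nonneg (japaneseBracket_pos T m).le r
  rw [hqu, weightedCoeff, smul_mul_assoc, ← sub_smul, enorm_smul, enorm_mul,
    Real.enorm_eq_ofReal_abs]
  simp only [enorm_weightedCoeff]
  calc _ ≤ ENNReal.ofReal (max 1 s * 2 ^ (s - θ) * (japaneseBracket T (-k + l) ^ s +
          japaneseBracket T (-k + l) ^ θ * japaneseBracket T k ^ (s - θ))) *
        (‖fourierCoeff u k‖ₑ * ‖fourierCoeff f (-k + l)‖ₑ) := by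
        gcongr; exact abs_japaneseBracket_rpow_sub_le T k l hθ hθ1 hθs
    _ = _ := by
        rw [ENNReal.ofReal_mul (by positivity),
          ENNReal.ofReal_add (hpos _ _) (mul_nonneg (hpos _ _) (hpos _ _)),
          ENNReal.ofReal_mul (hpos _ _)]
        ring

theorem commutatorConst_ne_top (hs : 1 / 2 < s - θ) : commutatorConst T s θ ≠ ∞ := by
  have := embeddingConst_ne_top hT.out.ne' hs
  unfold commutatorConst
  finiteness

/-- The partial sum over `F` of the Fourier series of `u`. -/
noncomputable def fourierPartialSum (F : Finset ℤ) (u : C(AddCircle T, ℂ)) : C(AddCircle T, ℂ) :=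
  ∑ k ∈ F, fourierCoeff u k • fourier k

theorem fourierCoeff_fourierPartialSum (F : Finset ℤ) (u : C(AddCircle T, ℂ)) (l : ℤ) :
    fourierCoeff (fourierPartialSum F u) l = if l ∈ F then fourierCoeff u l else 0 := by
  simp only [fourierPartialSum, ← fourierCoeffCLM_apply, map_sum, map_smul]
  simp [fourierCoeff_fourier, Pi.single_apply]

theorem sobolevNorm_fourierPartialSum_le (s : ℝ) (F : Finset ℤ) (u : C(AddCircle T, ℂ)) :
    sobolevNorm s (fourierPartialSum F u) ≤ sobolevNorm s u := by
  refine eLpNorm_mono_enorm fun l => ?_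
  rw [enorm_weightedCoeff, enorm_weightedCoeff, fourierCoeff_fourierPartialSum]
  split_ifs <;> simp

theorem eLpNorm_weightedCoeff_mul_sub_fourierCoeff_mul_le (hθ : 0 ≤ θ) (hθ1 : θ ≤ 1) (hθs : θ ≤ s)
    (f : C(AddCircle T, ℂ)) {u q : C(AddCircle T, ℂ)} (hu : Summable (fourierCoeff u))
    (hq : Summable (fourierCoeff q)) (hqu : fourierCoeff q = weightedCoeff s u) :
    eLpNorm (weightedCoeff s (f * u) - fourierCoeff (f * q : C(AddCircle T, ℂ))) 2
      Measure.count ≤ commutatorConst T s θ * sobolevNorm s f * sobolevNorm (s - θ) u := calc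
  _ ≤ ENNReal.ofReal (max 1 s * 2 ^ (s - θ)) * ((∑' l, ‖fourierCoeff u l‖ₑ) * sobolevNorm s f +
        (∑' l, ‖weightedCoeff θ f l‖ₑ) * sobolevNorm (s - θ) u) :=
      eLpNorm_le_of_le_lconvolution_add
        (enorm_weightedCoeff_mul_sub_fourierCoeff_mul_le hθ hθ1 hθs f hu hq hqu)
  _ ≤ ENNReal.ofReal (max 1 s * 2 ^ (s - θ)) *
        (embeddingConst T (s - θ) * sobolevNorm (s - θ) u * sobolevNorm s f +
          embeddingConst T (s - θ) * sobolevNorm s f * sobolevNorm (s - θ) u) := by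
      gcongr
      · exact tsum_enorm_fourierCoeff_le (s - θ) u
      · simpa using tsum_enorm_weightedCoeff_le θ (s - θ) f
  _ = commutatorConst T s θ * sobolevNorm s f * sobolevNorm (s - θ) u := by
      rw [commutatorConst]; ring

theorem sobolevNorm_mul_le_of_norm_eq_one_of_summable (hθ : 0 ≤ θ) (hθ1 : θ ≤ 1) (hθs : θ ≤ s)
    {E : C(AddCircle T, ℂ)} (hE : ∀ x, ‖E x‖ = 1) {u : C(AddCircle T, ℂ)}
    (hu : Summable (fourierCoeff u)) (hsu : Summable (weightedCoeff s u)) :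
    sobolevNorm s (E * u) ≤ sobolevNorm s u +
      commutatorConst T s θ * sobolevNorm s E * sobolevNorm (s - θ) u := by
  let q : C(AddCircle T, ℂ) := ∑' k, weightedCoeff s u k • fourier k
  have hqu : fourierCoeff q = weightedCoeff s u := funext (fourierCoeff_tsum_smul_fourier hsu)
  have hEq : sobolevNorm 0 (E * q) = sobolevNorm s u := by
    rw [sobolevNorm_zero_mul_of_norm_eq_one hE, sobolevNorm, weightedCoeff_zero_exponent, hqu,
      sobolevNorm]
  calc sobolevNorm s (E * u)
      ≤ sobolevNorm 0 (E * q) +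
          eLpNorm (weightedCoeff s (E * u) - fourierCoeff (E * q : C(AddCircle T, ℂ))) 2
            Measure.count := by
        rw [sobolevNorm, sobolevNorm, weightedCoeff_zero_exponent]
        simpa using eLpNorm_add_le (μ := Measure.count)
          (f := fourierCoeff (E * q : C(AddCircle T, ℂ))) (g := weightedCoeff s (E * u) -
            fourierCoeff (E * q : C(AddCircle T, ℂ))) .of_discrete .of_discrete one_le_two
    _ ≤ _ := by
        rw [hEq]
        gcongr
        exact eLpNorm_weightedCoeff_mul_sub_fourierCoeff_mul_le hθ hθ1 hθs E hu (hqu ▸ hsu) hqu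

theorem sobolevNorm_mul_le_of_norm_eq_one (hθ : 0 ≤ θ) (hθ1 : θ ≤ 1) (hs : 1 / 2 < s - θ)
    {E : C(AddCircle T, ℂ)} (hE : ∀ x, ‖E x‖ = 1) (u : C(AddCircle T, ℂ)) :
    sobolevNorm s (E * u) ≤ sobolevNorm s u +
      commutatorConst T s θ * sobolevNorm s E * sobolevNorm (s - θ) u := by
  rcases eq_or_ne (sobolevNorm s u) ∞ with hu | hu
  · simp [hu]
  have hθs : θ ≤ s := by linarith
  have hpartial (F : Finset ℤ) : sobolevNorm s (E * fourierPartialSum F u) ≤ sobolevNorm s u +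
      commutatorConst T s θ * sobolevNorm s E * sobolevNorm (s - θ) u := by
    have hzero {k : ℤ} (hk : k ∉ F) : fourierCoeff (fourierPartialSum F u) k = 0 := by
      rw [fourierCoeff_fourierPartialSum, if_neg hk]
    refine (sobolevNorm_mul_le_of_norm_eq_one_of_summable hθ hθ1 hθs hE
      (summable_of_ne_finset_zero (s := F) fun k hk => hzero hk)
      (summable_of_ne_finset_zero (s := F) fun k hk => ?_)).trans ?_
    · rw [weightedCoeff, hzero hk, smul_zero]
    · gcongr <;> exact sobolevNorm_fourierPartialSum_le _ F u
  have hlim : Tendsto (fun F => E * fourierPartialSum F u) atTop (𝓝 (E * u)) :=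
    (hasSum_fourier_series_of_summable (summable_fourierCoeff (by linarith) hu)).const_mul E
  exact (isClosed_setOf_sobolevNorm_le s _).mem_of_tendsto hlim (.of_forall hpartial)

end Products

theorem le_pow_mul_add_of_succ_le {u : ℕ → ℝ≥0∞} {c b : ℝ≥0∞} (hc : 1 ≤ c)
    (hu : ∀ n, u (n + 1) ≤ c * u n + b) (n : ℕ) : u n ≤ c ^ n * (u 0 + n * b) := by
  induction n with
  | zero => simp
  | succ n ih =>
    calc u (n + 1) ≤ c * (c ^ n * (u 0 + n * b)) + c ^ (n + 1) * b :=
          (hu n).trans (add_le_add (by gcongr)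
            (le_mul_of_one_le_left' (one_le_pow_of_one_le' hc _)))
      _ = c ^ (n + 1) * (u 0 + (n + 1 : ℕ) * b) := by push_cast; ring

theorem one_add_mul_ofReal_inv_pow_le_exp {D : ℝ≥0∞} (hD : D ≠ ∞) (n : ℕ) :
    (1 + D * ENNReal.ofReal (n + 1 : ℝ)⁻¹) ^ n ≤ ENNReal.ofReal (rexp D.toReal) := by
  lift D to NNReal using hD
  rw [← ENNReal.ofReal_coe_nnreal, ← ENNReal.ofReal_mul D.coe_nonneg, ← ENNReal.ofReal_one,
    ← ENNReal.ofReal_add zero_le_one (by positivity), ← ENNReal.ofReal_pow (by positivity),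
    ENNReal.toReal_ofReal D.coe_nonneg]
  refine ENNReal.ofReal_le_ofReal ?_
  calc (1 + D * (n + 1 : ℝ)⁻¹) ^ n ≤ rexp (D * (n + 1 : ℝ)⁻¹) ^ n := by
        gcongr
        linarith [Real.add_one_le_exp (D * (n + 1 : ℝ)⁻¹)]
    _ = rexp (D * (n * (n + 1 : ℝ)⁻¹)) := by rw [← Real.exp_nat_mul]; ring_nf
    _ ≤ rexp D := by
        gcongr
        refine mul_le_of_le_one_right D.coe_nonneg (mul_inv_le_one_of_le₀ ?_ ?_) <;> linarith

section Powers

variable {T : ℝ} [hT : Fact (0 < T)] {s θ : ℝ}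

theorem sobolevNorm_sub_le_inv_mul_add {a : ℝ} (ha : 0 < a) (hθ : 0 < θ) (hθs : θ ≤ s)
    (u : C(AddCircle T, ℂ)) : sobolevNorm (s - θ) u ≤
      ENNReal.ofReal a⁻¹ * sobolevNorm s u +
        ENNReal.ofReal (a ^ ((s - θ) / θ)) * sobolevNorm 0 u := by
  have hmul (c : ℝ) (r : ℝ) : eLpNorm (fun l => ENNReal.ofReal c * ‖weightedCoeff r u l‖ₑ) 2
      Measure.count = ENNReal.ofReal c * sobolevNorm r u := by
    rw [eLpNorm_ennreal_const_mul two_ne_zero ENNReal.ofNat_ne_top _ .of_discrete, eLpNorm_enorm,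
      sobolevNorm]
  rw [← hmul, ← hmul]
  refine le_trans (eLpNorm_mono_enorm fun l => ?_)
    (eLpNorm_add_le .of_discrete .of_discrete one_le_two)
  have hl := japaneseBracket_pos T l
  simp only [enorm_eq_self, Pi.add_apply, enorm_weightedCoeff, Real.rpow_zero, ENNReal.ofReal_one,
    one_mul]
  rw [← mul_assoc, ← add_mul, ← ENNReal.ofReal_mul (by positivity),
    ← ENNReal.ofReal_add (by positivity) (by positivity)]
  gcongr
  exact rpow_sub_le_inv_mul_add hl ha hθ hθs

theorem sobolevNorm_zero_of_norm_eq_one {E : C(AddCircle T, ℂ)} (hE : ∀ x, ‖E x‖ = 1) :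
    sobolevNorm 0 E = 1 := by
  rw [← mul_one E, sobolevNorm_zero_mul_of_norm_eq_one hE, sobolevNorm_one]

theorem sobolevNorm_pow_succ_le_of_norm_eq_one (hθ : 0 < θ) (hθ1 : θ ≤ 1) (hs : 1 / 2 < s - θ)
    {E : C(AddCircle T, ℂ)} (hE : ∀ x, ‖E x‖ = 1) {a : ℝ} (ha : 0 < a) (n : ℕ) :
    sobolevNorm s (E ^ (n + 1)) ≤
      (1 + commutatorConst T s θ * sobolevNorm s E * ENNReal.ofReal a⁻¹) * sobolevNorm s (E ^ n) +
        commutatorConst T s θ * sobolevNorm s E * ENNReal.ofReal (a ^ ((s - θ) / θ)) := by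
  have hEn : sobolevNorm 0 (E ^ n) = 1 := sobolevNorm_zero_of_norm_eq_one fun x => by simp [hE]
  have hlow := sobolevNorm_sub_le_inv_mul_add ha hθ (by linarith : θ ≤ s) (E ^ n)
  rw [hEn, mul_one] at hlow
  rw [pow_succ']
  refine (sobolevNorm_mul_le_of_norm_eq_one hθ.le hθ1 hs hE (E ^ n)).trans ?_
  grw [hlow]
  exact le_of_eq (by ring)

theorem sobolevNorm_pow_le_of_norm_eq_one (hθ : 0 < θ) (hθ1 : θ ≤ 1) (hs : 1 / 2 < s - θ)
    {E : C(AddCircle T, ℂ)} (hE : ∀ x, ‖E x‖ = 1) {D : ℝ≥0∞} (hD : D ≠ ∞)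
    (hED : commutatorConst T s θ * sobolevNorm s E ≤ D) (n : ℕ) :
    sobolevNorm s (E ^ n) ≤ ENNReal.ofReal (rexp D.toReal) *
      (1 + n * (D * ENNReal.ofReal ((n + 1 : ℝ) ^ ((s - θ) / θ)))) := by
  -- `a = n + 1` keeps the factor `(1 + D / a) ^ n` produced by the iteration bounded.
  have hstep (k : ℕ) := sobolevNorm_pow_succ_le_of_norm_eq_one hθ hθ1 hs hE
    (a := n + 1) (by positivity) k
  grw [hED] at hstep
  refine (le_pow_mul_add_of_succ_le le_self_add hstep n).trans ?_
  rw [pow_zero, sobolevNorm_one]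
  gcongr
  exact one_add_mul_ofReal_inv_pow_le_exp hD n

theorem exists_sobolevNorm_pow_le (T : ℝ) [Fact (0 < T)] (hs : 1 / 2 < s) :
    ∃ p : ℕ, ∀ B ≠ ∞, ∃ K ≠ ∞, ∀ E : C(AddCircle T, ℂ), (∀ x, ‖E x‖ = 1) →
      sobolevNorm s E ≤ B → ∀ n : ℕ, sobolevNorm s (E ^ n) ≤ K * (n + 1) ^ p := by
  obtain ⟨θ, hθ, hθ1, hθs⟩ : ∃ θ, 0 < θ ∧ θ ≤ 1 ∧ 1 / 2 < s - θ :=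
    ⟨min 1 ((s - 1 / 2) / 2), lt_min one_pos (by linarith), min_le_left _ _,
      by linarith [min_le_right 1 ((s - 1 / 2) / 2)]⟩
  set p := ⌈(s - θ) / θ⌉₊
  refine ⟨p + 1, fun B hB => ?_⟩
  set D := commutatorConst T s θ * B
  have hD : D ≠ ∞ := ENNReal.mul_ne_top (commutatorConst_ne_top hθs) hB
  refine ⟨ENNReal.ofReal (rexp D.toReal) * (1 + D), by finiteness, fun E hE hEB n => ?_⟩
  have hpow : ENNReal.ofReal ((n + 1 : ℝ) ^ ((s - θ) / θ)) ≤ (n + 1) ^ p := calc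
    _ ≤ ENNReal.ofReal ((n + 1 : ℝ) ^ p) := by
        rw [← Real.rpow_natCast]
        gcongr
        · linarith [n.cast_nonneg (α := ℝ)]
        · exact Nat.le_ceil _
    _ = (n + 1) ^ p := by
        rw [ENNReal.ofReal_pow (by positivity), ENNReal.ofReal_add (by positivity) zero_le_one]
        simp
  calc sobolevNorm s (E ^ n)
      ≤ ENNReal.ofReal (rexp D.toReal) * (1 + n * (D * (n + 1) ^ p)) := by
        grw [sobolevNorm_pow_le_of_norm_eq_one hθ hθ1 hθs hE hD (mul_le_mul_right hEB _) n, hpow]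
    _ ≤ ENNReal.ofReal (rexp D.toReal) * ((n + 1) ^ (p + 1) + (n + 1) * (D * (n + 1) ^ p)) := by
        gcongr
        · exact one_le_pow_of_one_le' le_add_self _
        · exact le_self_add
    _ = _ := by ring

end Powers

section Exponential

variable {T : ℝ} [hT : Fact (0 < T)] {s : ℝ}

theorem sobolevNorm_pow_succ_le (hs : 1 / 2 < s) (f : C(AddCircle T, ℂ)) (k : ℕ) :
    sobolevNorm s (f ^ (k + 1)) ≤ (algebraConst T s * sobolevNorm s f) ^ k * sobolevNorm s f := by
  induction k with
  | zero => simp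
  | succ k ih =>
    calc sobolevNorm s (f ^ (k + 2))
        ≤ algebraConst T s * sobolevNorm s f * sobolevNorm s (f ^ (k + 1)) := by
          rw [pow_succ' f]; exact sobolevNorm_mul_le hs f _
      _ ≤ _ := by grw [ih, pow_succ', mul_assoc (_ * _)]

theorem sobolevNorm_exp_sub_one_le (hs : 1 / 2 < s) (f : C(AddCircle T, ℂ)) :
    sobolevNorm s (NormedSpace.exp f - 1) ≤
      ENNReal.ofReal (rexp (algebraConst T s * sobolevNorm s f).toReal) * sobolevNorm s f := by
  rcases eq_or_ne (sobolevNorm s f) ∞ with hf | hf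
  · simp [hf]
  have hAf : algebraConst T s * sobolevNorm s f ≠ ∞ :=
    ENNReal.mul_ne_top (algebraConst_ne_top hs) hf
  set A := algebraConst T s * sobolevNorm s f
  have hseries : HasSum (fun k : ℕ => ((k + 1).factorial : ℂ)⁻¹ • f ^ (k + 1))
      (NormedSpace.exp f - 1) := by
    simpa using (hasSum_nat_add_iff' 1).2 (NormedSpace.exp_series_hasSum_exp' (𝕂 := ℂ) f)
  have hterm (k : ℕ) : sobolevNorm s (((k + 1).factorial : ℂ)⁻¹ • f ^ (k + 1)) ≤
      ENNReal.ofReal (A.toReal ^ k / k.factorial) * sobolevNorm s f := by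
    have hfact : ‖((k + 1).factorial : ℂ)⁻¹‖ₑ ≤ ENNReal.ofReal (k.factorial : ℝ)⁻¹ := by
      rw [← ofReal_norm, norm_inv, Complex.norm_natCast]
      gcongr
      exact k.le_succ
    rw [sobolevNorm_smul, div_eq_inv_mul, ENNReal.ofReal_mul (by positivity),
      ENNReal.ofReal_pow ENNReal.toReal_nonneg, ENNReal.ofReal_toReal hAf, mul_assoc]
    grw [hfact, sobolevNorm_pow_succ_le hs f k]
  refine (isClosed_setOf_sobolevNorm_le s _).mem_of_tendsto hseries (.of_forall fun F => ?_)
  calc sobolevNorm s (∑ k ∈ F, ((k + 1).factorial : ℂ)⁻¹ • f ^ (k + 1))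
      ≤ ∑ k ∈ F, ENNReal.ofReal (A.toReal ^ k / k.factorial) * sobolevNorm s f :=
        (sobolevNorm_sum_le s F _).trans (Finset.sum_le_sum fun k _ => hterm k)
    _ = ENNReal.ofReal (∑ k ∈ F, A.toReal ^ k / k.factorial) * sobolevNorm s f := by
        rw [← Finset.sum_mul, ENNReal.ofReal_sum_of_nonneg fun _ _ => by positivity]
    _ ≤ ENNReal.ofReal (rexp A.toReal) * sobolevNorm s f := by
        rw [Real.exp_eq_exp_ℝ, NormedSpace.exp_eq_tsum_div]
        gcongr
        exact (Real.summable_pow_div_factorial _).sum_le_tsum F fun _ _ => by positivity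

end Exponential

section PlaneWave

variable {X : Type*} [TopologicalSpace X]

/-- The plane wave `x ↦ 𝐞 ⟪ξ, v x⟫` of frequency `ξ` along `v`, as a continuous function of `ξ`. -/
noncomputable def planeWave (v : C(X, ℂ)) : C(ℂ, C(X, ℂ)) :=
  ContinuousMap.curry ⟨fun p : ℂ × X => (𝐞 (inner ℝ p.1 (v p.2)) : ℂ),
    continuous_subtype_val.comp (Real.continuous_fourierChar.comp (by fun_prop))⟩

theorem planeWave_apply (v : C(X, ℂ)) (ξ : ℂ) (x : X) :
    planeWave v ξ x = 𝐞 (inner ℝ ξ (v x)) := rfl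

theorem norm_planeWave_apply (v : C(X, ℂ)) (ξ : ℂ) (x : X) : ‖planeWave v ξ x‖ = 1 :=
  Circle.norm_coe _

theorem planeWave_add (v u : C(X, ℂ)) (ξ : ℂ) :
    planeWave (v + u) ξ = planeWave v ξ * planeWave u ξ := by
  ext x
  simp [planeWave_apply, inner_add_right, AddChar.map_add_eq_mul]

theorem planeWave_nsmul (v : C(X, ℂ)) (n : ℕ) (ξ : ℂ) :
    planeWave v (n • ξ) = planeWave v ξ ^ n := by
  ext x
  rw [ContinuousMap.pow_apply, planeWave_apply, planeWave_apply, ← Nat.cast_smul_eq_nsmul ℝ,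
    real_inner_smul_left, ← smul_eq_mul, Nat.cast_smul_eq_nsmul, AddChar.map_nsmul_eq_pow,
    Circle.coe_pow]

variable [CompactSpace X]

theorem norm_planeWave_le (v : C(X, ℂ)) (ξ : ℂ) : ‖planeWave v ξ‖ ≤ 1 :=
  (ContinuousMap.norm_le _ zero_le_one).2 fun x => (norm_planeWave_apply v ξ x).le

theorem exp_continuousMap_apply (f : C(X, ℂ)) (x : X) :
    NormedSpace.exp f x = Complex.exp (f x) := by
  rw [Complex.exp_eq_exp_ℂ]
  exact NormedSpace.map_exp (ContinuousMap.evalAlgHom ℂ ℂ x) (continuous_eval_const x) f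

theorem planeWave_eq_exp (v : C(X, ℂ)) (ξ : ℂ) :
    planeWave v ξ = NormedSpace.exp ((π * Complex.I) • (star ξ • v + ξ • star v)) := by
  ext x
  have hinner : star ξ * v x + ξ * star (v x) = ((2 * inner ℝ ξ (v x) : ℝ) : ℂ) := by
    apply Complex.ext <;> simp [Complex.inner] <;> ring
  rw [exp_continuousMap_apply, planeWave_apply, Real.fourierChar_apply]
  simp only [ContinuousMap.coe_smul, ContinuousMap.coe_add, ContinuousMap.coe_star, Pi.smul_apply,
    Pi.add_apply, Pi.star_apply, smul_eq_mul, hinner]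
  push_cast
  ring_nf

end PlaneWave

theorem exists_nsmul_eq_of_norm_le_one {E : Type*} [NormedAddCommGroup E] [NormedSpace ℝ E]
    (ξ : E) : ∃ (n : ℕ) (ζ : E), n • ζ = ξ ∧ ‖ζ‖ ≤ 1 ∧ (n : ℝ≥0∞) ≤ 1 + ‖ξ‖ₑ := by
  have hn : (0 : ℝ) < (⌊‖ξ‖⌋₊ + 1 : ℕ) := by positivity
  refine ⟨⌊‖ξ‖⌋₊ + 1, ((⌊‖ξ‖⌋₊ + 1 : ℕ) : ℝ)⁻¹ • ξ, ?_, ?_, ?_⟩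
  · rw [← Nat.cast_smul_eq_nsmul ℝ, smul_inv_smul₀ hn.ne']
  · rw [norm_smul, norm_inv, Real.norm_of_nonneg hn.le, inv_mul_le_one₀ hn]
    exact_mod_cast (Nat.lt_floor_add_one _).le
  · rw [Nat.cast_succ, add_comm, ← ofReal_norm, ← ENNReal.ofReal_natCast]
    gcongr
    exact Nat.floor_le (norm_nonneg ξ)

section Growth

variable {T : ℝ} [hT : Fact (0 < T)] {s : ℝ}

theorem exists_sobolevNorm_planeWave_sub_one_le_of_norm_le_one (hs : 1 / 2 < s) {R : ℝ≥0∞}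
    (hR : R ≠ ∞) : ∃ K ≠ ∞, ∀ v : C(AddCircle T, ℂ), sobolevNorm s v ≤ R → ∀ ξ : ℂ, ‖ξ‖ ≤ 1 →
      sobolevNorm s (planeWave v ξ - 1) ≤ K * sobolevNorm s v := by
  have hA := algebraConst_ne_top (T := T) hs
  refine ⟨ENNReal.ofReal (rexp (algebraConst T s * (ENNReal.ofReal (2 * π) * R)).toReal) *
    ENNReal.ofReal (2 * π), by finiteness, fun v hv ξ hξ => ?_⟩
  have hξ' : ‖ξ‖ₑ ≤ 1 := by simpa [← ofReal_norm] using hξ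
  have hphase : sobolevNorm s ((π * Complex.I) • (star ξ • v + ξ • star v)) ≤
      ENNReal.ofReal (2 * π) * sobolevNorm s v := calc
    _ ≤ ‖(π * Complex.I : ℂ)‖ₑ * (‖ξ‖ₑ * sobolevNorm s v + ‖ξ‖ₑ * sobolevNorm s v) := by
        rw [sobolevNorm_smul]
        grw [sobolevNorm_add_le, sobolevNorm_smul, sobolevNorm_smul, sobolevNorm_star]
        simp [← ofReal_norm]
    _ ≤ ‖(π * Complex.I : ℂ)‖ₑ * (1 * sobolevNorm s v + 1 * sobolevNorm s v) := by grw [hξ']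
    _ = ENNReal.ofReal (2 * π) * sobolevNorm s v := by
        rw [ENNReal.ofReal_mul two_pos.le, ← ofReal_norm]
        simp [abs_of_pos Real.pi_pos]
        ring
  rw [planeWave_eq_exp]
  refine (sobolevNorm_exp_sub_one_le hs _).trans ?_
  rw [mul_assoc]
  gcongr
  · have := hv.trans_lt hR.lt_top; finiteness
  · grw [hphase, hv]

theorem exists_sobolevNorm_planeWave_pow_le (T : ℝ) [Fact (0 < T)] (hs : 1 / 2 < s) :
    ∃ p : ℕ, ∀ R ≠ ∞, ∃ K ≠ ∞, ∀ v : C(AddCircle T, ℂ), sobolevNorm s v ≤ R → ∀ ξ : ℂ, ‖ξ‖ ≤ 1 →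
      ∀ n : ℕ, sobolevNorm s (planeWave v ξ ^ n) ≤ K * (n + 1) ^ p := by
  obtain ⟨p, hp⟩ := exists_sobolevNorm_pow_le T hs
  refine ⟨p, fun R hR => ?_⟩
  obtain ⟨K₁, hK₁, hsmall⟩ := exists_sobolevNorm_planeWave_sub_one_le_of_norm_le_one (T := T) hs hR
  obtain ⟨K₂, hK₂, hpow⟩ := hp (K₁ * R + 1) (by finiteness)
  refine ⟨K₂, hK₂, fun v hv ξ hξ => hpow _ (norm_planeWave_apply v ξ) ?_⟩
  rw [← sub_add_cancel (planeWave v ξ) 1]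
  grw [sobolevNorm_add_le, hsmall v hv ξ hξ, hv, sobolevNorm_one]

theorem exists_sobolevNorm_planeWave_le (T : ℝ) [Fact (0 < T)] (hs : 1 / 2 < s) :
    ∃ p : ℕ, ∀ R ≠ ∞, ∃ K ≠ ∞, ∀ v : C(AddCircle T, ℂ), sobolevNorm s v ≤ R → ∀ ξ : ℂ,
      sobolevNorm s (planeWave v ξ) ≤ K * (2 + ‖ξ‖ₑ) ^ p := by
  obtain ⟨p, hp⟩ := exists_sobolevNorm_planeWave_pow_le T hs
  refine ⟨p, fun R hR => ?_⟩
  obtain ⟨K, hK, hpow⟩ := hp R hR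
  refine ⟨K, hK, fun v hv ξ => ?_⟩
  obtain ⟨n, ζ, rfl, hζ, hn⟩ := exists_nsmul_eq_of_norm_le_one ξ
  rw [planeWave_nsmul]
  grw [hpow v hv ζ hζ n, hn]
  exact le_of_eq (by ring)

theorem exists_sobolevNorm_planeWave_sub_one_le (T : ℝ) [Fact (0 < T)] (hs : 1 / 2 < s) :
    ∃ p : ℕ, ∀ R ≠ ∞, ∃ K ≠ ∞, ∀ v : C(AddCircle T, ℂ), sobolevNorm s v ≤ R → ∀ ξ : ℂ,
      sobolevNorm s (planeWave v ξ - 1) ≤ K * (2 + ‖ξ‖ₑ) ^ p * sobolevNorm s v := by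
  obtain ⟨p, hp⟩ := exists_sobolevNorm_planeWave_pow_le T hs
  refine ⟨p + 1, fun R hR => ?_⟩
  obtain ⟨K₁, hK₁, hsmall⟩ := exists_sobolevNorm_planeWave_sub_one_le_of_norm_le_one (T := T) hs hR
  obtain ⟨K₂, hK₂, hpow⟩ := hp R hR
  have hA := algebraConst_ne_top (T := T) hs
  refine ⟨algebraConst T s * K₂ * K₁, by finiteness, fun v hv ξ => ?_⟩
  obtain ⟨n, ζ, rfl, hζ, hn⟩ := exists_nsmul_eq_of_norm_le_one ξ
  have hsum : sobolevNorm s (∑ j ∈ Finset.range n, planeWave v ζ ^ j) ≤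
      K₂ * (n + 1) ^ (p + 1) := calc
    _ ≤ ∑ j ∈ Finset.range n, K₂ * (n + 1) ^ p := by
        refine (sobolevNorm_sum_le s _ _).trans (Finset.sum_le_sum fun j hj => ?_)
        grw [hpow v hv ζ hζ j, (Finset.mem_range.1 hj).le]
    _ = n * (K₂ * (n + 1) ^ p) := by simp
    _ ≤ (n + 1) * (K₂ * (n + 1) ^ p) := by gcongr; exact le_self_add
    _ = K₂ * (n + 1) ^ (p + 1) := by ring
  calc sobolevNorm s (planeWave v (n • ζ) - 1)
      ≤ algebraConst T s * (K₂ * (n + 1) ^ (p + 1)) * (K₁ * sobolevNorm s v) := by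
        rw [planeWave_nsmul, ← geom_sum_mul]
        grw [sobolevNorm_mul_le hs, hsum, hsmall v hv ζ hζ]
    _ ≤ algebraConst T s * (K₂ * (1 + ‖n • ζ‖ₑ + 1) ^ (p + 1)) * (K₁ * sobolevNorm s v) := by
        grw [← hn]
    _ = algebraConst T s * K₂ * K₁ * (2 + ‖n • ζ‖ₑ) ^ (p + 1) * sobolevNorm s v := by ring

theorem exists_sobolevNorm_planeWave_sub_le (T : ℝ) [Fact (0 < T)] (hs : 1 / 2 < s) :
    ∃ p : ℕ, ∀ R ≠ ∞, ∃ K ≠ ∞, ∀ v u : C(AddCircle T, ℂ), sobolevNorm s v ≤ R →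
      sobolevNorm s u ≤ R → ∀ ξ : ℂ,
      sobolevNorm s (planeWave v ξ - planeWave u ξ) ≤
        K * (2 + ‖ξ‖ₑ) ^ p * sobolevNorm s (v - u) := by
  obtain ⟨p, hp⟩ := exists_sobolevNorm_planeWave_le T hs
  obtain ⟨q, hq⟩ := exists_sobolevNorm_planeWave_sub_one_le T hs
  refine ⟨p + q, fun R hR => ?_⟩
  obtain ⟨K₁, hK₁, hgrowth⟩ := hp R hR
  obtain ⟨K₂, hK₂, hsub_one⟩ := hq (R + R) (by finiteness)
  have hA := algebraConst_ne_top (T := T) hs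
  refine ⟨algebraConst T s * K₁ * K₂, by finiteness, fun v u hv hu ξ => ?_⟩
  have hvu := (sobolevNorm_sub_le s v u).trans (add_le_add hv hu)
  have hfactor : planeWave v ξ - planeWave u ξ = planeWave u ξ * (planeWave (v - u) ξ - 1) := by
    rw [mul_sub, mul_one, ← planeWave_add, add_sub_cancel]
  calc sobolevNorm s (planeWave v ξ - planeWave u ξ)
      ≤ algebraConst T s * (K₁ * (2 + ‖ξ‖ₑ) ^ p) *
          (K₂ * (2 + ‖ξ‖ₑ) ^ q * sobolevNorm s (v - u)) := by
        rw [hfactor]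
        grw [sobolevNorm_mul_le hs, hgrowth u hu ξ, hsub_one _ hvu ξ]
    _ = _ := by ring

end Growth

section Schwartz

theorem lintegral_add_enorm_pow_mul_schwartzMap_ne_top {E F : Type*} [NormedAddCommGroup E]
    [NormedSpace ℝ E] [NormedAddCommGroup F] [NormedSpace ℝ F] [MeasurableSpace E] [BorelSpace E]
    [SecondCountableTopology E] (μ : Measure E) [μ.HasTemperateGrowth] (G : 𝓢(E, F)) {c : ℝ≥0∞}
    (hc : c ≠ ∞) (p : ℕ) : ∫⁻ ξ, (c + ‖ξ‖ₑ) ^ p * ‖G ξ‖ₑ ∂μ ≠ ∞ := by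
  have hfin (k : ℕ) : ∫⁻ ξ, ‖ξ‖ₑ ^ k * ‖G ξ‖ₑ ∂μ < ∞ := by
    simpa [HasFiniteIntegral, enorm_mul, enorm_pow] using (G.integrable_pow_mul μ k).2
  have hG : Measurable fun ξ => ‖G ξ‖ₑ := G.continuous.enorm.measurable
  simp_rw [add_pow, Finset.sum_mul]
  rw [lintegral_finsetSum _ fun k _ => by fun_prop, ENNReal.sum_ne_top]
  intro k _
  simp_rw [mul_right_comm _ _ (p.choose k : ℝ≥0∞), mul_assoc _ (‖_‖ₑ ^ _)]
  rw [lintegral_const_mul _ (by fun_prop)]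
  exact ENNReal.mul_ne_top (by finiteness) (hfin _).ne

variable {X : Type*} [TopologicalSpace X] [CompactSpace X]

theorem integrable_smul_planeWave {φ : ℂ → ℂ} (hφ : Integrable φ) (v : C(X, ℂ)) :
    Integrable fun ξ => φ ξ • planeWave v ξ :=
  hφ.smul_bdd 1 (planeWave v).continuous.aestronglyMeasurable (.of_forall (norm_planeWave_le v))

theorem schwartzMap_comp_eq_integral_planeWave (G : 𝓢(ℂ, ℂ)) (v : C(X, ℂ)) :
    G.toContinuousMap.comp v = ∫ ξ, 𝓕 G ξ • planeWave v ξ := by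
  ext x
  rw [ContinuousMap.integral_apply (integrable_smul_planeWave (𝓕 G).integrable v)]
  calc G (v x) = 𝓕⁻ (𝓕 G) (v x) := by rw [FourierTransform.fourierInv_fourier_eq]
    _ = ∫ ξ, 𝐞 (inner ℝ ξ (v x)) • 𝓕 G ξ := by
      rw [SchwartzMap.fourierInv_coe, Real.fourierInv_eq]
    _ = ∫ ξ, (𝓕 G ξ • planeWave v ξ) x := by
      simp only [Circle.smul_def, ContinuousMap.smul_apply, planeWave_apply, smul_eq_mul, mul_comm]

end Schwartz

section Composition

variable {T : ℝ} [hT : Fact (0 < T)] {s : ℝ}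

theorem sobolevNorm_integral_le {α : Type*} [MeasurableSpace α] {μ : Measure α} [SFinite μ] (s : ℝ)
    {H : α → C(AddCircle T, ℂ)} (hH : Integrable H μ) :
    sobolevNorm s (∫ ξ, H ξ ∂μ) ≤ ∫⁻ ξ, sobolevNorm s (H ξ) ∂μ := by
  obtain ⟨H', hH', hHH'⟩ := hH.aestronglyMeasurable
  rw [integral_congr_ae hHH', lintegral_congr_ae (hHH'.mono fun ξ h => congrArg (sobolevNorm s) h)]
  replace hH : Integrable H' μ := hH.congr hHH'
  have hmeas : Measurable (Function.uncurry fun ξ l => ‖weightedCoeff s (H' ξ) l‖ₑ) := by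
    refine measurable_from_prod_countable_left fun l => ?_
    simp only [Function.uncurry_apply_pair, weightedCoeff, ← fourierCoeffCLM_apply]
    have h := (fourierCoeffCLM l).continuous.comp_stronglyMeasurable hH'
    exact (h.const_smul (japaneseBracket T l ^ s)).enorm
  have hcoeff (l : ℤ) :
      ‖weightedCoeff s (∫ ξ, H' ξ ∂μ) l‖ₑ ≤ ‖∫⁻ ξ, ‖weightedCoeff s (H' ξ) l‖ₑ ∂μ‖ₑ := by
    simp only [weightedCoeff, ← fourierCoeffCLM_apply, enorm_eq_self]
    rw [← (fourierCoeffCLM l).integral_comp_comm hH, ← integral_smul]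
    exact enorm_integral_le_lintegral_enorm _
  calc sobolevNorm s (∫ ξ, H' ξ ∂μ)
      ≤ eLpNorm (fun l => ∫⁻ ξ, ‖weightedCoeff s (H' ξ) l‖ₑ ∂μ) 2 Measure.count :=
        eLpNorm_mono_enorm hcoeff
    _ ≤ ∫⁻ ξ, eLpNorm (fun l => ‖weightedCoeff s (H' ξ) l‖ₑ) 2 Measure.count ∂μ :=
        eLpNorm_lintegral_le one_le_two ENNReal.ofNat_ne_top hmeas
    _ = ∫⁻ ξ, sobolevNorm s (H' ξ) ∂μ := by simp only [eLpNorm_enorm, sobolevNorm]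

theorem exists_sobolevNorm_schwartz_comp_sub_comp_le (hs : 1 / 2 < s) (G : 𝓢(ℂ, ℂ)) {R : ℝ≥0∞}
    (hR : R ≠ ∞) : ∃ K ≠ ∞, ∀ v u : C(AddCircle T, ℂ), sobolevNorm s v ≤ R → sobolevNorm s u ≤ R →
      sobolevNorm s (G.toContinuousMap.comp v - G.toContinuousMap.comp u) ≤
        K * sobolevNorm s (v - u) := by
  obtain ⟨p, hp⟩ := exists_sobolevNorm_planeWave_sub_le T hs
  obtain ⟨K, hK, hwave⟩ := hp R hR
  refine ⟨K * ∫⁻ ξ, (2 + ‖ξ‖ₑ) ^ p * ‖𝓕 G ξ‖ₑ, ENNReal.mul_ne_top hK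
    (lintegral_add_enorm_pow_mul_schwartzMap_ne_top volume (𝓕 G) ENNReal.ofNat_ne_top p),
    fun v u hv hu => ?_⟩
  have hint := integrable_smul_planeWave (X := AddCircle T) (𝓕 G).integrable
  have hmeas : Measurable fun ξ => (2 + ‖ξ‖ₑ) ^ p * ‖𝓕 G ξ‖ₑ :=
    Measurable.mul (by fun_prop) (𝓕 G).continuous.enorm.measurable
  rw [schwartzMap_comp_eq_integral_planeWave, schwartzMap_comp_eq_integral_planeWave,
    ← integral_sub (hint v) (hint u)]
  simp only [← smul_sub]
  calc sobolevNorm s (∫ ξ, 𝓕 G ξ • (planeWave v ξ - planeWave u ξ))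
      ≤ ∫⁻ ξ, sobolevNorm s (𝓕 G ξ • (planeWave v ξ - planeWave u ξ)) :=
        sobolevNorm_integral_le s (by simpa only [smul_sub] using! (hint v).sub (hint u))
    _ ≤ ∫⁻ ξ, K * sobolevNorm s (v - u) * ((2 + ‖ξ‖ₑ) ^ p * ‖𝓕 G ξ‖ₑ) := by
        refine lintegral_mono fun ξ => ?_
        grw [sobolevNorm_smul, hwave v u hv hu ξ]
        exact le_of_eq (by ring)
    _ = K * (∫⁻ ξ, (2 + ‖ξ‖ₑ) ^ p * ‖𝓕 G ξ‖ₑ) * sobolevNorm s (v - u) := by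
        rw [lintegral_const_mul _ hmeas, mul_right_comm]

theorem exists_schwartzMap_eqOn_closedBall {E F : Type*} [NormedAddCommGroup E] [NormedSpace ℝ E]
    [HasContDiffBump E] [FiniteDimensional ℝ E] [NormedAddCommGroup F] [NormedSpace ℝ F]
    {g : E → F} (hg : ContDiff ℝ (⊤ : ℕ∞) g) (c : E) (r : ℝ) :
    ∃ G : 𝓢(E, F), Set.EqOn G g (Metric.closedBall c r) := by
  let χ : ContDiffBump c := ⟨max r 1, max r 1 + 1, by positivity, lt_add_one _⟩
  have hχ : HasCompactSupport (fun z => χ z • g z) := χ.hasCompactSupport.smul_right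
  refine ⟨hχ.toSchwartzMap (χ.contDiff.smul hg), fun z hz => ?_⟩
  rw [HasCompactSupport.toSchwartzMap_toFun, χ.one_of_mem_closedBall, one_smul]
  exact Metric.closedBall_subset_closedBall (le_max_left r 1) hz

theorem exists_sobolevNorm_comp_sub_comp_le (hs : 1 / 2 < s) (g : C(ℂ, ℂ))
    (hg : ContDiff ℝ (⊤ : ℕ∞) g) {R : ℝ≥0∞} (hR : R ≠ ∞) :
    ∃ K ≠ ∞, ∀ v u : C(AddCircle T, ℂ), sobolevNorm s v ≤ R → sobolevNorm s u ≤ R →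
      sobolevNorm s (g.comp v - g.comp u) ≤ K * sobolevNorm s (v - u) := by
  have hbound := ENNReal.mul_ne_top (embeddingConst_ne_top hT.out.ne' hs) hR
  obtain ⟨G, hG⟩ := exists_schwartzMap_eqOn_closedBall hg 0 (embeddingConst T s * R).toReal
  have hcomp (v : C(AddCircle T, ℂ)) (hv : sobolevNorm s v ≤ R) :
      g.comp v = G.toContinuousMap.comp v := by
    ext x
    refine (hG (mem_closedBall_zero_iff.2 ?_)).symm
    rw [← toReal_enorm]
    refine ENNReal.toReal_mono hbound ?_
    grw [enorm_apply_le hs v x, hv]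
  obtain ⟨K, hK, hlip⟩ := exists_sobolevNorm_schwartz_comp_sub_comp_le (T := T) hs G hR
  refine ⟨K, hK, fun v u hv hu => ?_⟩
  rw [hcomp v hv, hcomp u hu]
  exact hlip v u hv hu

end Composition

section SobolevSummand

variable {T : ℝ} [hT : Fact (0 < T)] {s : ℝ}

theorem sobolevSummand_eq_norm_weightedCoeff_sq (s : ℝ) (f : C(AddCircle T, ℂ)) (l : ℤ) :
    sobolevSummand T s f l = ‖weightedCoeff s f l‖ ^ 2 := by
  have hpos := (japaneseBracket_pos T l).le
  rw [weightedCoeff, norm_smul, mul_pow, Real.norm_of_nonneg (Real.rpow_nonneg hpos s),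
    ← Real.rpow_mul_natCast hpos, mul_comm s, Real.rpow_natCast_mul hpos, japaneseBracket_sq,
    sobolevSummand]

theorem summable_sobolevSummand_iff (s : ℝ) (f : C(AddCircle T, ℂ)) :
    Summable (sobolevSummand T s f) ↔ sobolevNorm s f ≠ ∞ := by
  simp_rw [sobolevNorm, eLpNorm_two_count, ← sobolevSummand_eq_norm_weightedCoeff_sq]
  rw [Ne, ENNReal.rpow_eq_top_iff_of_pos one_half_pos]
  refine ⟨fun h => h.tsum_ofReal_ne_top, fun h => ?_⟩
  refine (ENNReal.summable_toReal h).congr fun l => ENNReal.toReal_ofReal ?_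
  exact sobolevSummand_eq_norm_weightedCoeff_sq s f l ▸ sq_nonneg _

theorem sqrt_tsum_sobolevSummand (s : ℝ) (f : C(AddCircle T, ℂ)) :
    √(∑' l, sobolevSummand T s f l) = (sobolevNorm s f).toReal := by
  have hnonneg (l : ℤ) : 0 ≤ ‖weightedCoeff s f l‖ ^ 2 := sq_nonneg _
  simp_rw [sobolevNorm, eLpNorm_two_count, sobolevSummand_eq_norm_weightedCoeff_sq]
  rw [← ENNReal.toReal_rpow, ENNReal.tsum_toReal_eq fun _ => ENNReal.ofReal_ne_top,
    Real.sqrt_eq_rpow]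
  simp only [ENNReal.toReal_ofReal (hnonneg _)]

theorem sobolevNorm_le_natCeil {f : C(AddCircle T, ℂ)} {R : ℝ}
    (hf : Summable (sobolevSummand T s f)) (hR : √(∑' l, sobolevSummand T s f l) ≤ R) :
    sobolevNorm s f ≤ ⌈R⌉₊ := by
  rw [summable_sobolevSummand_iff] at hf
  rw [sqrt_tsum_sobolevSummand] at hR
  rw [← ENNReal.toReal_le_toReal hf (ENNReal.natCast_ne_top _), ENNReal.toReal_natCast]
  exact hR.trans (Nat.le_ceil R)

end SobolevSummand

/-- Local Lipschitz property of the composition operator `u ↦ g ∘ u` on `H^s`,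
`s > 1/2`, with constant `α(g,R)` nondecreasing in `R`. -/
theorem stmt12 (T : ℝ) [hT : Fact (0 < T)] (s : ℝ) (hs : 1/2 < s)
    (g : ℂ → ℂ) (hg : ContDiff ℝ (⊤ : ℕ∞) g) :
    ∃ α : ℝ → ℝ, Monotone α ∧ (∀ R, 0 < R → 0 < α R) ∧
      ∀ R, 0 < R → ∀ v w : AddCircle T → ℂ, Continuous v → Continuous w →
        Summable (sobolevSummand T s v) → Summable (sobolevSummand T s w) →
        Real.sqrt (∑' l : ℤ, sobolevSummand T s v l) ≤ R →
        Real.sqrt (∑' l : ℤ, sobolevSummand T s w l) ≤ R →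
        Summable (sobolevSummand T s (fun x => g (v x) - g (w x))) ∧
        Real.sqrt (∑' l : ℤ, sobolevSummand T s (fun x => g (v x) - g (w x)) l)
          ≤ α R * Real.sqrt (∑' l : ℤ, sobolevSummand T s (fun x => v x - w x) l) := by
  choose K hK hlip using fun n : ℕ =>
    exists_sobolevNorm_comp_sub_comp_le (T := T) hs ⟨g, hg.continuous⟩ hg (ENNReal.natCast_ne_top n)
  let κ : ℕ →o ℝ := partialSups fun n => (K n).toReal
  have hκ (n : ℕ) : (K n).toReal ≤ κ n := le_partialSups (fun n => (K n).toReal) n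
  refine ⟨fun R => 1 + κ ⌈R⌉₊, fun _ _ h => by dsimp only; gcongr, fun R _ =>
    add_pos_of_pos_of_nonneg one_pos (ENNReal.toReal_nonneg.trans (hκ _)),
    fun R _ v w hv hw hsv hsw hRv hRw => ?_⟩
  lift v to C(AddCircle T, ℂ) using hv
  lift w to C(AddCircle T, ℂ) using hw
  have hle := hlip ⌈R⌉₊ v w (sobolevNorm_le_natCeil hsv hRv) (sobolevNorm_le_natCeil hsw hRw)
  rw [summable_sobolevSummand_iff] at hsv hsw
  have hsub : sobolevNorm s (v - w) ≠ ∞ :=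
    ne_top_of_le_ne_top (ENNReal.add_ne_top.2 ⟨hsv, hsw⟩) (sobolevNorm_sub_le s v w)
  have hne := ENNReal.mul_ne_top (hK ⌈R⌉₊) hsub
  have hsub_coe : (fun x => v x - w x) = ⇑(v - w) := rfl
  have hcomp_coe : (fun x => g (v x) - g (w x)) =
    ⇑((⟨g, hg.continuous⟩ : C(ℂ, ℂ)).comp v - (⟨g, hg.continuous⟩ : C(ℂ, ℂ)).comp w) := rfl
  rw [hcomp_coe, hsub_coe, summable_sobolevSummand_iff, sqrt_tsum_sobolevSummand,
    sqrt_tsum_sobolevSummand]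
  refine ⟨ne_top_of_le_ne_top hne hle, (ENNReal.toReal_mono hne hle).trans ?_⟩
  rw [ENNReal.toReal_mul]
  gcongr
  exact (hκ _).trans (le_add_of_nonneg_left zero_le_one)
end

section
/- Let g ∈ C^∞(ℂ, ℂ) and s > 1/2. There is a nondecreasing function χ_g : ℝ₊ → ℝ₊ such that for all u ∈ H^s, ‖g(u)‖_s ≤ ‖g(0)‖_s + χ_g(‖u‖_{L^∞}) ‖u‖_s. -/
open scoped Real

/-!
With `k > s`, Parseval's identity makes `‖u‖_s ^ 2` comparable to
`‖u‖₂ ^ 2 + ∫ ‖Δ_h ^ k u‖₂ ^ 2 |h| ^ (-1 - 2 * s) dh`, because `∫ |e ^ (i a h) - 1| ^ (2 * k)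
|h| ^ (-1 - 2 * s) dh` is a multiple of `|a| ^ (2 * s)`. It therefore suffices to bound
`‖Δ_h ^ k (g ∘ u)‖₂` by a multiple of `‖Δ_h ^ k u‖₂` for each fixed step `h`, uniformly in `h` and
in `u` with `‖u‖_∞ ≤ R`.

This is a discrete form of the classical proof of Moser's estimate for integer order. The
interpolation inequality `‖Δ_h ^ i u‖_(2 * k / i) ≲ ‖u‖_∞ ^ (1 - i / k) * ‖Δ_h ^ k u‖₂ ^ (i / k)`
follows from a log-convexity estimate, itself obtained by summation by parts. Hadamard's lemma
`g y - g x = H (x, y) (y - x)` then takes the place of the chain rule: it writes `Δ_h (g ∘ u)` as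
`H` applied to `Δ_h u`, with `H` smooth of one order less, and the Leibniz rule with Hölder's
inequality propagates the bounds by induction on `k`.
-/

open MeasureTheory ENNReal NNReal Filter Topology fwdDiff

universe u

section Hadamard

theorem hasFDerivAt_intervalIntegral_of_continuous {E W : Type*} [NormedAddCommGroup E]
    [NormedSpace ℝ E] [NormedAddCommGroup W] [NormedSpace ℝ W] {F : E → ℝ → W}
    {F' : E → ℝ → E →L[ℝ] W} {a b : ℝ} (hF : ∀ x, Continuous (F x))
    (hF' : Continuous (Function.uncurry F'))
    (hFF' : ∀ x t, HasFDerivAt (fun y => F y t) (F' x t) x) (x₀ : E) :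
    HasFDerivAt (fun x => ∫ t in a..b, F x t) (∫ t in a..b, F' x₀ t) x₀ := by
  have hF'x₀ : Continuous (F' x₀) := hF'.comp (Continuous.prodMk_right x₀)
  have h_near : ∀ᶠ x in 𝓝 x₀, ∀ t ∈ Set.uIcc a b, ‖F' x t‖ ≤ ‖F' x₀ t‖ + 1 := by
    refine isCompact_uIcc.eventually_forall_of_forall_eventually fun t _ => ?_
    have h_lt : ‖F' x₀ t‖ < ‖F' x₀ t‖ + 1 := lt_add_one _
    have h_norm : Continuous fun z : E × ℝ => ‖F' z.1 z.2‖ := hF'.norm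
    have h_bound : Continuous fun z : E × ℝ => ‖F' x₀ z.2‖ + 1 := by fun_prop
    exact (h_norm.continuousAt.eventually_lt h_bound.continuousAt h_lt).mono fun _ => le_of_lt
  exact intervalIntegral.hasFDerivAt_integral_of_dominated_of_fderiv_le h_near
    (.of_forall fun x => (hF x).aestronglyMeasurable) ((hF x₀).intervalIntegrable a b)
    hF'x₀.aestronglyMeasurable
    (.of_forall fun t ht x hx => hx t (Set.uIoc_subset_uIcc ht))
    ((hF'x₀.norm.add continuous_const).intervalIntegrable a b)
    (.of_forall fun t _ x _ => hFF' x t)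

theorem contDiff_intervalIntegral {n : ℕ} {E W : Type u} [NormedAddCommGroup E]
    [NormedSpace ℝ E] [NormedAddCommGroup W] [NormedSpace ℝ W] [CompleteSpace W]
    {F : E × ℝ → W} (hF : ContDiff ℝ n F) (a b : ℝ) :
    ContDiff ℝ n fun x => ∫ t in a..b, F (x, t) := by
  induction n generalizing W with
  | zero =>
    exact contDiff_zero.2 <| intervalIntegral.continuous_parametric_intervalIntegral_of_continuous'
      (f := fun x t => F (x, t)) hF.continuous a b
  | succ n ih =>
    have hF' : ContDiff ℝ n fun z => (fderiv ℝ F z).comp (.inl ℝ E ℝ) :=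
      (hF.fderiv_right le_rfl).clm_comp contDiff_const
    refine contDiff_succ_iff_hasFDerivAt.2 ⟨_, ih hF', fun x => ?_⟩
    refine hasFDerivAt_intervalIntegral_of_continuous
      (F' := fun x t => (fderiv ℝ F (x, t)).comp (.inl ℝ E ℝ))
      (fun y => hF.continuous.comp (Continuous.prodMk_right y)) hF'.continuous (fun y t => ?_) x
    have hFy : HasFDerivAt F (fderiv ℝ F (y, t)) (y, t) :=
      (hF.differentiable (by simp) _).hasFDerivAt
    exact hFy.comp y (hasFDerivAt_prodMk_left y t)

theorem exists_contDiff_sub_eq_apply_sub {n : ℕ} {V W : Type u} [NormedAddCommGroup V]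
    [NormedSpace ℝ V] [NormedAddCommGroup W] [NormedSpace ℝ W] [CompleteSpace W]
    {G : V → W} (hG : ContDiff ℝ (n + 1) G) :
    ∃ H : V × V → V →L[ℝ] W, ContDiff ℝ n H ∧ ∀ x y, G y - G x = H (x, y) (y - x) := by
  have hG' : ContDiff ℝ n (fderiv ℝ G) := hG.fderiv_right le_rfl
  have h_seg : ContDiff ℝ n fun z : (V × V) × ℝ => z.1.1 + z.2 • (z.1.2 - z.1.1) := by fun_prop
  refine ⟨fun z => ∫ t in (0 : ℝ)..1, fderiv ℝ G (z.1 + t • (z.2 - z.1)),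
    contDiff_intervalIntegral (hG'.comp h_seg) 0 1, fun x y => ?_⟩
  have h_cont : Continuous fun t : ℝ => fderiv ℝ G (x + t • (y - x)) :=
    hG'.continuous.comp (by fun_prop)
  have h_deriv (t : ℝ) :
      HasDerivAt (fun t : ℝ => G (x + t • (y - x))) (fderiv ℝ G (x + t • (y - x)) (y - x)) t := by
    have h_line : HasDerivAt (fun t : ℝ => x + t • (y - x)) (y - x) t := by
      simpa using ((hasDerivAt_id t).smul_const (y - x)).const_add x
    exact (hG.differentiable (by simp) _).hasFDerivAt.comp_hasDerivAt t h_line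
  have h_ftc := intervalIntegral.integral_eq_sub_of_hasDerivAt (fun t _ => h_deriv t)
    ((h_cont.clm_apply continuous_const).intervalIntegrable 0 1)
  simpa [ContinuousLinearMap.intervalIntegral_apply (h_cont.intervalIntegrable 0 1)]
    using h_ftc.symm

end Hadamard

section FwdDiffIterates

variable {X : Type*} [AddCommGroup X] {V W : Type*} [NormedAddCommGroup V] [NormedAddCommGroup W]

theorem fwdDiff_iter_prodMk (h : X) (n : ℕ) (f : X → V) (g : X → W) :
    Δ_[h] ^[n] (fun x => (f x, g x)) = fun x => (Δ_[h] ^[n] f x, Δ_[h] ^[n] g x) := by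
  induction n generalizing f g with
  | zero => rfl
  | succ _ ih => exact ih (Δ_[h] f) (Δ_[h] g)

theorem fwdDiff_clm_apply [NormedSpace ℝ V] [NormedSpace ℝ W] (h : X) (f : X → V →L[ℝ] W)
    (v : X → V) :
    Δ_[h] (fun x => f x (v x)) = (fun x => Δ_[h] f x (v (x + h))) + fun x => f x (Δ_[h] v x) := by
  ext x
  simp only [fwdDiff, Pi.add_apply, sub_apply, map_sub]
  abel

variable [MeasurableSpace X] [MeasurableAdd X] {μ : Measure X} [μ.IsAddRightInvariant]

theorem aestronglyMeasurable_comp_add_right {f : X → V} (hf : AEStronglyMeasurable f μ) (h : X) :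
    AEStronglyMeasurable (fun x => f (x + h)) μ :=
  hf.comp_measurePreserving (measurePreserving_add_right μ h)

theorem aestronglyMeasurable_fwdDiff_iter {f : X → V} (hf : AEStronglyMeasurable f μ) (h : X)
    (n : ℕ) : AEStronglyMeasurable (Δ_[h] ^[n] f) μ := by
  induction n generalizing f with
  | zero => exact hf
  | succ _ ih => exact ih ((aestronglyMeasurable_comp_add_right hf h).sub hf)

theorem eLpNorm_comp_add_right {f : X → V} (hf : AEStronglyMeasurable f μ) (h : X) (p : ℝ≥0∞) :
    eLpNorm (fun x => f (x + h)) p μ = eLpNorm f p μ :=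
  eLpNorm_comp_measurePreserving hf (measurePreserving_add_right μ h)

theorem memLp_comp_add_right {f : X → V} {p : ℝ≥0∞} (hf : MemLp f p μ) (h : X) :
    MemLp (fun x => f (x + h)) p μ :=
  hf.comp_measurePreserving (measurePreserving_add_right μ h)

theorem memLp_fwdDiff_iter {f : X → V} {p : ℝ≥0∞} (hf : MemLp f p μ) (h : X) (n : ℕ) :
    MemLp (Δ_[h] ^[n] f) p μ := by
  induction n generalizing f with
  | zero => exact hf
  | succ _ ih => exact ih ((memLp_comp_add_right hf h).sub hf)

end FwdDiffIterates

section Exponents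

theorem holderTriple_div_natCast {p : ℝ≥0∞} (hp : p ≠ 0) (a b : ℕ) :
    HolderTriple (p / a) (p / b) (p / (a + b : ℕ)) := by
  constructor
  have h_inv (m : ℕ) : (p / m)⁻¹ = m / p :=
    ENNReal.inv_div (.inl (natCast_ne_top m)) (.inr hp)
  rw [h_inv, h_inv, h_inv, ← ENNReal.add_div, Nat.cast_add]

theorem one_le_div_natCast {p : ℝ≥0∞} (hp : p ≠ 0) {m : ℕ} (hm : m ≤ p) : 1 ≤ p / m := by
  rw [ENNReal.le_div_iff_mul_le (.inr hp) (.inl (natCast_ne_top m)), one_mul]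
  exact hm

end Exponents

section BoundedMaps

variable {X V W : Type*} [MeasurableSpace X] {μ : Measure X} [NormedAddCommGroup V]
  [NormedAddCommGroup W]

theorem ae_mem_closedBall_of_eLpNorm_top_le {R : ℝ≥0} {u : X → V} (hu : eLpNorm u ⊤ μ ≤ R) :
    ∀ᵐ x ∂μ, u x ∈ Metric.closedBall 0 (R : ℝ) := by
  rw [eLpNorm_exponent_top] at hu
  filter_upwards [ae_le_eLpNormEssSup (f := u) (μ := μ)] with x hx
  rw [mem_closedBall_zero_iff]
  exact_mod_cast hx.trans hu

variable [ProperSpace V]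

theorem memLp_comp_of_eLpNorm_top_le [IsFiniteMeasure μ] {G : V → W} (hG : Continuous G)
    (p : ℝ≥0∞) {R : ℝ≥0} {u : X → V} (hu : AEStronglyMeasurable u μ) (huR : eLpNorm u ⊤ μ ≤ R) :
    MemLp (fun x => G (u x)) p μ := by
  obtain ⟨M, hM⟩ := (isCompact_closedBall (0 : V) R).exists_bound_of_continuousOn hG.continuousOn
  exact .of_bound (hG.comp_aestronglyMeasurable hu) M
    ((ae_mem_closedBall_of_eLpNorm_top_le huR).mono fun x hx => hM _ hx)

theorem exists_eLpNorm_comp_sub_le (μ : Measure X) {G : V → W} (hG : LocallyLipschitz G)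
    (p : ℝ≥0∞) (R : ℝ≥0) :
    ∃ C : ℝ≥0, ∀ u : X → V, eLpNorm u ⊤ μ ≤ R →
      eLpNorm (fun x => G (u x) - G 0) p μ ≤ C * eLpNorm u p μ := by
  obtain ⟨C, hC⟩ := (hG.locallyLipschitzOn (s := Metric.closedBall 0 R)
    ).exists_lipschitzOnWith_of_compact (isCompact_closedBall 0 (R : ℝ))
  refine ⟨C, fun u huR => eLpNorm_le_mul_eLpNorm_of_ae_le_mul' ?_ p⟩
  filter_upwards [ae_mem_closedBall_of_eLpNorm_top_le huR] with x hx
  have h_edist := hC hx (Metric.mem_closedBall_self R.coe_nonneg)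
  rwa [edist_eq_enorm_sub, edist_zero_right] at h_edist

end BoundedMaps

/-- The scale of bounds `‖Δ_[h]^a f‖_{p / (i + a)} ≤ A ε ^ (i + a)`, `0 ≤ a ≤ n`, with the
convention `p / 0 = ∞`: they hold for the `i`-th difference of a bounded function `u` that satisfies
`‖Δ_[h]^m u‖_{p / m} ≤ A ε ^ m` for `m ≤ i + n`, and are stable under products and smooth
substitutions. -/
structure FwdDiffBound {X V : Type*} [AddCommGroup X] [MeasurableSpace X] [NormedAddCommGroup V]
    (μ : Measure X) (h : X) (p ε : ℝ≥0∞) (i n : ℕ) (A : ℝ≥0) (f : X → V) : Prop where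
  aestronglyMeasurable : AEStronglyMeasurable f μ
  eLpNorm_le : ∀ a ≤ n, eLpNorm (Δ_[h] ^[a] f) (p / (i + a : ℕ)) μ ≤ A * ε ^ (i + a)

namespace FwdDiffBound

variable {X : Type*} [AddCommGroup X] [MeasurableSpace X] {μ : Measure X} {h : X} {p ε : ℝ≥0∞}
  {i j n : ℕ} {A B : ℝ≥0}

section Basic

variable {V W : Type*} [NormedAddCommGroup V] [NormedAddCommGroup W] {f : X → V} {g : X → W}

theorem mono_order (hf : FwdDiffBound μ h p ε i n A f) {m : ℕ} (hmn : m ≤ n) :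
    FwdDiffBound μ h p ε i m A f :=
  ⟨hf.aestronglyMeasurable, fun a ha => hf.eLpNorm_le a (ha.trans hmn)⟩

theorem mono_const (hf : FwdDiffBound μ h p ε i n A f) (hAB : A ≤ B) :
    FwdDiffBound μ h p ε i n B f :=
  ⟨hf.aestronglyMeasurable, fun a ha => (hf.eLpNorm_le a ha).trans <| by gcongr⟩

theorem of_succ (hf : FwdDiffBound μ h p ε i 0 A f)
    (hΔf : FwdDiffBound μ h p ε (i + 1) n A (Δ_[h] f)) : FwdDiffBound μ h p ε i (n + 1) A f where
  aestronglyMeasurable := hf.aestronglyMeasurable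
  eLpNorm_le
    | 0, _ => hf.eLpNorm_le 0 le_rfl
    | a + 1, ha => by
      have h_idx : i + (a + 1) = i + 1 + a := by ring
      rw [Function.iterate_succ_apply, h_idx]
      exact hΔf.eLpNorm_le a (Nat.le_of_succ_le_succ ha)

variable [MeasurableAdd X] [μ.IsAddRightInvariant]

protected theorem fwdDiff (hf : FwdDiffBound μ h p ε i (n + 1) A f) :
    FwdDiffBound μ h p ε (i + 1) n A (Δ_[h] f) where
  aestronglyMeasurable := aestronglyMeasurable_fwdDiff_iter hf.aestronglyMeasurable h 1
  eLpNorm_le a ha := by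
    have h_idx : i + 1 + a = i + (a + 1) := by ring
    rw [← Function.iterate_succ_apply, h_idx]
    exact hf.eLpNorm_le (a + 1) (by lia)

theorem comp_add_right (hf : FwdDiffBound μ h p ε i n A f) :
    FwdDiffBound μ h p ε i n A fun x => f (x + h) where
  aestronglyMeasurable := aestronglyMeasurable_comp_add_right hf.aestronglyMeasurable h
  eLpNorm_le a ha := by
    have h_comm : Δ_[h] ^[a] (fun x => f (x + h)) = fun x => Δ_[h] ^[a] f (x + h) :=
      funext (fwdDiff_iter_comp_add h f h a)
    rw [h_comm,
      eLpNorm_comp_add_right (aestronglyMeasurable_fwdDiff_iter hf.aestronglyMeasurable h a) h]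
    exact hf.eLpNorm_le a ha

theorem prodMk (hf : FwdDiffBound μ h p ε i n A f) (hg : FwdDiffBound μ h p ε i n B g)
    (hp : p ≠ 0) (hin : (i + n : ℕ) ≤ p) :
    FwdDiffBound μ h p ε i n (A + B) fun x => (f x, g x) where
  aestronglyMeasurable := hf.aestronglyMeasurable.prodMk hg.aestronglyMeasurable
  eLpNorm_le a ha := by
    have h_one : 1 ≤ p / (i + a : ℕ) :=
      one_le_div_natCast hp (le_trans (by gcongr) hin)
    have hf_meas := aestronglyMeasurable_fwdDiff_iter hf.aestronglyMeasurable h a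
    have hg_meas := aestronglyMeasurable_fwdDiff_iter hg.aestronglyMeasurable h a
    calc eLpNorm (Δ_[h] ^[a] fun x => (f x, g x)) (p / (i + a : ℕ)) μ
        ≤ eLpNorm (fun x => ‖Δ_[h] ^[a] f x‖ + ‖Δ_[h] ^[a] g x‖) (p / (i + a : ℕ)) μ := by
          rw [fwdDiff_iter_prodMk]
          exact eLpNorm_mono_real fun x => max_le_add_of_nonneg (norm_nonneg _) (norm_nonneg _)
      _ ≤ eLpNorm (Δ_[h] ^[a] f) (p / (i + a : ℕ)) μ
            + eLpNorm (Δ_[h] ^[a] g) (p / (i + a : ℕ)) μ := by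
          rw [← eLpNorm_norm (Δ_[h] ^[a] f), ← eLpNorm_norm (Δ_[h] ^[a] g)]
          exact eLpNorm_add_le hf_meas.norm hg_meas.norm h_one
      _ ≤ (A + B : ℝ≥0) * ε ^ (i + a) := by
          rw [ENNReal.coe_add, add_mul]
          exact add_le_add (hf.eLpNorm_le a ha) (hg.eLpNorm_le a ha)

protected theorem add {f g : X → V} (hf : FwdDiffBound μ h p ε i n A f)
    (hg : FwdDiffBound μ h p ε i n B g) (hp : p ≠ 0) (hin : (i + n : ℕ) ≤ p) :
    FwdDiffBound μ h p ε i n (A + B) (f + g) where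
  aestronglyMeasurable := hf.aestronglyMeasurable.add hg.aestronglyMeasurable
  eLpNorm_le a ha := by
    have h_one : 1 ≤ p / (i + a : ℕ) :=
      one_le_div_natCast hp (le_trans (by gcongr) hin)
    rw [fwdDiff_iter_add, ENNReal.coe_add, add_mul]
    exact (eLpNorm_add_le (aestronglyMeasurable_fwdDiff_iter hf.aestronglyMeasurable h a)
      (aestronglyMeasurable_fwdDiff_iter hg.aestronglyMeasurable h a) h_one).trans
      (add_le_add (hf.eLpNorm_le a ha) (hg.eLpNorm_le a ha))

end Basic

section Product

variable {V W : Type*} [NormedAddCommGroup V] [NormedSpace ℝ V] [NormedAddCommGroup W]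
  [NormedSpace ℝ W] {f : X → V →L[ℝ] W} {v : X → V}

theorem clm_apply_zero (hf : FwdDiffBound μ h p ε i 0 A f) (hv : FwdDiffBound μ h p ε j 0 B v)
    (hp : p ≠ 0) : FwdDiffBound μ h p ε (i + j) 0 (A * B) fun x => f x (v x) where
  aestronglyMeasurable := (continuous_fst.clm_apply continuous_snd).comp_aestronglyMeasurable
    (hf.aestronglyMeasurable.prodMk hv.aestronglyMeasurable)
  eLpNorm_le a ha := by
    obtain rfl : a = 0 := Nat.le_zero.1 ha
    have := holderTriple_div_natCast hp i j
    calc eLpNorm (fun x => f x (v x)) (p / (i + j : ℕ)) μ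
        ≤ (1 : ℝ≥0) * eLpNorm f (p / i) μ * eLpNorm v (p / j) μ :=
          eLpNorm_le_eLpNorm_mul_eLpNorm_of_nnnorm hf.aestronglyMeasurable hv.aestronglyMeasurable
            (fun L w => L w) 1 (.of_forall fun x => by simpa using (f x).le_opNNNorm (v x))
      _ ≤ (1 : ℝ≥0) * (A * ε ^ i) * (B * ε ^ j) := by
          gcongr
          exacts [hf.eLpNorm_le 0 le_rfl, hv.eLpNorm_le 0 le_rfl]
      _ = (A * B : ℝ≥0) * ε ^ (i + j) := by push_cast; ring

theorem clm_apply [MeasurableAdd X] [μ.IsAddRightInvariant] (hf : FwdDiffBound μ h p ε i n A f)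
    (hv : FwdDiffBound μ h p ε j n B v) (hp : p ≠ 0) (hijn : (i + j + n : ℕ) ≤ p) :
    FwdDiffBound μ h p ε (i + j) n (2 ^ n * (A * B)) fun x => f x (v x) := by
  induction n generalizing i j f v with
  | zero => simpa using hf.clm_apply_zero hv hp
  | succ n ih =>
    have h_left := ih hf.fwdDiff (hv.mono_order n.le_succ).comp_add_right
      ((Nat.cast_le.2 (by lia)).trans hijn)
    have h_right := ih (hf.mono_order n.le_succ) hv.fwdDiff ((Nat.cast_le.2 (by lia)).trans hijn)
    rw [show i + 1 + j = i + j + 1 by ring] at h_left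
    have h_fwdDiff := h_left.add h_right hp ((Nat.cast_le.2 (by lia)).trans hijn)
    rw [← fwdDiff_clm_apply, ← two_mul, ← mul_assoc, ← pow_succ'] at h_fwdDiff
    refine .of_succ (.mono_const ((hf.mono_order n.succ.zero_le).clm_apply_zero
      (hv.mono_order n.succ.zero_le) hp) ?_) h_fwdDiff
    exact le_mul_of_one_le_left' (one_le_pow₀ one_le_two)

end Product

section Chain

variable (μ)

theorem exists_comp_continuous {V W : Type*} [NormedAddCommGroup V] [ProperSpace V]
    [NormedAddCommGroup W] {G : V → W} (hG : Continuous G) (hp : p ≠ 0) (R : ℝ≥0) :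
    ∃ C : ℝ≥0, ∀ (h : X) (ε : ℝ≥0∞) (u : X → V), FwdDiffBound μ h p ε 0 0 R u →
      FwdDiffBound μ h p ε 0 0 C fun x => G (u x) := by
  obtain ⟨C, hC⟩ :=
    (isCompact_closedBall (0 : V) R).exists_bound_of_continuousOn hG.continuousOn
  refine ⟨C.toNNReal, fun h ε u hu =>
    ⟨hG.comp_aestronglyMeasurable hu.aestronglyMeasurable, fun a ha => ?_⟩⟩
  obtain rfl : a = 0 := Nat.le_zero.1 ha
  have hu_top : eLpNorm u ⊤ μ ≤ R := by
    simpa [ENNReal.div_zero hp] using hu.eLpNorm_le 0 le_rfl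
  have h_top : eLpNormEssSup (fun x => G (u x)) μ ≤ C.toNNReal :=
    eLpNormEssSup_le_of_ae_bound
      ((ae_mem_closedBall_of_eLpNorm_top_le hu_top).mono fun x hx => hC _ hx)
  simpa [ENNReal.div_zero hp] using h_top

variable [MeasurableAdd X] [μ.IsAddRightInvariant]

theorem exists_comp_contDiff {V W : Type u} [NormedAddCommGroup V] [NormedSpace ℝ V]
    [ProperSpace V] [NormedAddCommGroup W] [NormedSpace ℝ W] [CompleteSpace W] {G : V → W}
    (hG : ContDiff ℝ n G) (hp : p ≠ 0) (hnp : n ≤ p) (R : ℝ≥0) :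
    ∃ C : ℝ≥0, ∀ (h : X) (ε : ℝ≥0∞) (u : X → V), FwdDiffBound μ h p ε 0 n R u →
      FwdDiffBound μ h p ε 0 n C fun x => G (u x) := by
  induction n generalizing V W R with
  | zero => exact exists_comp_continuous μ hG.continuous hp R
  | succ n ih =>
    obtain ⟨H, hH, hGH⟩ := exists_contDiff_sub_eq_apply_sub hG
    have hn : (n : ℝ≥0∞) ≤ p := le_trans (by simp) hnp
    obtain ⟨C₀, hC₀⟩ := exists_comp_continuous μ hG.continuous hp R
    obtain ⟨C₁, hC₁⟩ := ih hH hn (R + R)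
    refine ⟨C₀ + 2 ^ n * (C₁ * R), fun h ε u hu => ?_⟩
    have hu_n := hu.mono_order n.le_succ
    have h_pair := hu_n.prodMk hu_n.comp_add_right hp (by simpa using hn)
    have h_fwdDiff := (hC₁ h ε _ h_pair).clm_apply hu.fwdDiff hp (by simpa [add_comm] using hnp)
    have h_eq : (fun x => H (u x, u (x + h)) (Δ_[h] u x)) = Δ_[h] fun x => G (u x) :=
      funext fun x => (hGH _ _).symm
    rw [h_eq] at h_fwdDiff
    exact .of_succ ((hC₀ h ε u (hu.mono_order n.succ.zero_le)).mono_const le_self_add)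
      (by simpa using h_fwdDiff.mono_const le_add_self)

end Chain

end FwdDiffBound

section LogConvex

variable {a : ℕ → ℝ≥0} {k : ℕ}

theorem pow_succ_le_mul_pow_of_sq_le_mul (ha : ∀ j, j + 2 ≤ k → a (j + 1) ^ 2 ≤ a j * a (j + 2))
    {n : ℕ} (hn : n + 1 ≤ k) : a n ^ (n + 1) ≤ a 0 * a (n + 1) ^ n := by
  induction n with
  | zero => simp
  | succ n ih =>
    rcases eq_zero_or_pos (a (n + 1)) with h_zero | h_pos
    · simp [h_zero]
    refine le_of_mul_le_mul_left ?_ (pow_pos h_pos n)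
    calc a (n + 1) ^ n * a (n + 1) ^ (n + 2)
        = (a (n + 1) ^ 2) ^ (n + 1) := by ring
      _ ≤ (a n * a (n + 2)) ^ (n + 1) := by gcongr; exact ha n hn
      _ = a n ^ (n + 1) * a (n + 2) ^ (n + 1) := mul_pow ..
      _ ≤ a 0 * a (n + 1) ^ n * a (n + 2) ^ (n + 1) := by gcongr; exact ih (by lia)
      _ = a (n + 1) ^ n * (a 0 * a (n + 2) ^ (n + 1)) := by ring

theorem pow_le_pow_mul_pow_of_sq_le_mul (ha : ∀ j, j + 2 ≤ k → a (j + 1) ^ 2 ≤ a j * a (j + 2))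
    {i : ℕ} (hik : i ≤ k) : a i ^ k ≤ a 0 ^ (k - i) * a k ^ i := by
  induction k, hik using Nat.le_induction with
  | base => simp
  | succ m him ih =>
    rcases Nat.eq_zero_or_pos m with rfl | hm
    · simp [Nat.le_zero.1 him]
    obtain ⟨l, rfl⟩ := Nat.exists_eq_add_of_le him
    rw [add_assoc, Nat.add_sub_cancel_left, ← pow_le_pow_iff_left₀ zero_le zero_le hm.ne']
    have h_ih := ih fun j hj => ha j (by lia)
    rw [Nat.add_sub_cancel_left] at h_ih
    calc (a i ^ (i + (l + 1))) ^ (i + l)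
        = (a i ^ (i + l)) ^ (i + l + 1) := by ring
      _ ≤ (a 0 ^ l * a (i + l) ^ i) ^ (i + l + 1) := by gcongr
      _ = a 0 ^ (l * (i + l + 1)) * (a (i + l) ^ (i + l + 1)) ^ i := by ring
      _ ≤ a 0 ^ (l * (i + l + 1)) * (a 0 * a (i + l + 1) ^ (i + l)) ^ i := by
          gcongr
          exact pow_succ_le_mul_pow_of_sq_le_mul ha le_rfl
      _ = (a 0 ^ (l + 1) * a (i + (l + 1)) ^ i) ^ (i + l) := by ring_nf

theorem le_mul_pow_of_sq_le_mul {c A ε : ℝ≥0} (hk : k ≠ 0) (hc : 1 ≤ c) (hA : 1 ≤ A)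
    (ha : ∀ j, j + 2 ≤ k → a (j + 1) ^ 2 ≤ c * (a j * a (j + 2))) (ha₀ : a 0 ≤ A)
    (hak : a k = ε ^ k) {i : ℕ} (hik : i ≤ k) : a i ≤ c ^ k ^ 2 * A * ε ^ i := by
  -- `c ^ j ^ 2 * a j` is log-convex, because `j ^ 2 + (j + 2) ^ 2 = 2 * (j + 1) ^ 2 + 2`.
  have h_logConvex (j : ℕ) (hj : j + 2 ≤ k) : (c ^ (j + 1) ^ 2 * a (j + 1)) ^ 2
      ≤ c ^ j ^ 2 * a j * (c ^ (j + 2) ^ 2 * a (j + 2)) := by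
    calc (c ^ (j + 1) ^ 2 * a (j + 1)) ^ 2
        = c ^ (2 * (j + 1) ^ 2) * a (j + 1) ^ 2 := by ring
      _ ≤ c ^ (2 * (j + 1) ^ 2) * (c ^ 2 * (a j * a (j + 2))) := by
          gcongr
          exact (ha j hj).trans (by gcongr; exact le_self_pow₀ hc two_ne_zero)
      _ = c ^ j ^ 2 * a j * (c ^ (j + 2) ^ 2 * a (j + 2)) := by ring
  rw [← pow_le_pow_iff_left₀ zero_le zero_le hk]
  calc a i ^ k
      ≤ (c ^ i ^ 2 * a i) ^ k := by
        gcongr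
        exact le_mul_of_one_le_left' (one_le_pow₀ hc)
    _ ≤ (c ^ 0 ^ 2 * a 0) ^ (k - i) * (c ^ k ^ 2 * a k) ^ i :=
        pow_le_pow_mul_pow_of_sq_le_mul (a := fun j => c ^ j ^ 2 * a j) h_logConvex hik
    _ = a 0 ^ (k - i) * (c ^ k ^ 2) ^ i * (ε ^ i) ^ k := by rw [hak]; ring
    _ ≤ A ^ k * (c ^ k ^ 2) ^ k * (ε ^ i) ^ k := by
        gcongr ?_ * ?_ * _
        · exact (pow_le_pow_left₀ zero_le ha₀ _).trans (pow_le_pow_right₀ hA (k.sub_le i))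
        · exact pow_le_pow_right₀ (one_le_pow₀ hc) hik
    _ = (c ^ k ^ 2 * A * ε ^ i) ^ k := by ring

end LogConvex

section PowerMap

theorem rpow_sub_rpow_mul_le {x y q : ℝ} (hy : 0 ≤ y) (hyx : y ≤ x) (hq : 0 ≤ q) :
    (x ^ q - y ^ q) * y ≤ q * x ^ q * (x - y) := by
  rcases hy.eq_or_lt with rfl | hy_pos
  · have := Real.rpow_nonneg hyx q
    nlinarith [mul_nonneg (mul_nonneg hq this) hyx]
  have hx : 0 < x := hy_pos.trans_le hyx
  have h_bernoulli : 1 + (q + 1) * (y / x - 1) ≤ (y / x) ^ (q + 1) := by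
    simpa using one_add_mul_self_le_rpow_one_add (s := y / x - 1)
      (by linarith [div_pos hy_pos hx]) (p := q + 1) (by linarith)
  rw [Real.div_rpow hy hx.le, le_div_iff₀ (by positivity), Real.rpow_add_one hx.ne',
    Real.rpow_add_one hy_pos.ne'] at h_bernoulli
  have h_cancel : (1 + (q + 1) * (y / x - 1)) * (x ^ q * x)
      = x ^ q * x + (q + 1) * x ^ q * (y - x) := by
    field_simp
  linarith

theorem norm_rpow_smul_sub_rpow_smul_le {F : Type*} [NormedAddCommGroup F] [NormedSpace ℝ F]
    {q : ℝ} (hq : 0 ≤ q) (x y : F) :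
    ‖‖x‖ ^ q • x - ‖y‖ ^ q • y‖ ≤ (q + 1) * (‖x‖ ^ q + ‖y‖ ^ q) * ‖x - y‖ := by
  wlog hyx : ‖y‖ ≤ ‖x‖ generalizing x y
  · rw [norm_sub_rev, norm_sub_rev x, add_comm (‖x‖ ^ q)]
    exact this y x (le_of_not_ge hyx)
  have h_mono : ‖y‖ ^ q ≤ ‖x‖ ^ q := Real.rpow_le_rpow (norm_nonneg y) hyx hq
  calc ‖‖x‖ ^ q • x - ‖y‖ ^ q • y‖
      = ‖‖x‖ ^ q • (x - y) + (‖x‖ ^ q - ‖y‖ ^ q) • y‖ := by congr 1; module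
    _ ≤ ‖x‖ ^ q * ‖x - y‖ + (‖x‖ ^ q - ‖y‖ ^ q) * ‖y‖ := by
        refine (norm_add_le _ _).trans_eq ?_
        rw [norm_smul, norm_smul, Real.norm_of_nonneg (by positivity),
          Real.norm_of_nonneg (sub_nonneg.2 h_mono)]
    _ ≤ ‖x‖ ^ q * ‖x - y‖ + q * ‖x‖ ^ q * ‖x - y‖ := by
        gcongr _ + ?_
        refine (rpow_sub_rpow_mul_le (norm_nonneg y) hyx hq).trans ?_
        gcongr
        exact norm_sub_norm_le x y
    _ ≤ (q + 1) * (‖x‖ ^ q + ‖y‖ ^ q) * ‖x - y‖ := by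
        nlinarith [mul_nonneg (mul_nonneg (add_nonneg hq zero_le_one)
          (Real.rpow_nonneg (norm_nonneg y) q)) (norm_nonneg (x - y))]

end PowerMap

section GagliardoNirenberg

open scoped RealInnerProductSpace

variable {X : Type*} [MeasurableSpace X] {μ : Measure X}
  {F : Type*} [NormedAddCommGroup F] [InnerProductSpace ℝ F]

theorem integrable_inner_of_holderConjugate {f g : X → F} {p q : ℝ≥0∞} [HolderConjugate p q]
    (hf : MemLp f p μ) (hg : MemLp g q μ) : Integrable (fun x => ⟪f x, g x⟫) μ :=
  memLp_one_iff_integrable.1 <| hf.of_bilin (fun y z => ⟪y, z⟫) 1 hg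
    (hf.aestronglyMeasurable.inner hg.aestronglyMeasurable)
    (.of_forall fun x => by simpa using nnnorm_inner_le_nnnorm (𝕜 := ℝ) (f x) (g x))

theorem aestronglyMeasurable_norm_rpow_smul {f : X → F} (hf : AEStronglyMeasurable f μ) {q : ℝ}
    (hq : 0 ≤ q) : AEStronglyMeasurable (fun x => ‖f x‖ ^ q • f x) μ :=
  (Real.continuous_rpow_const hq).comp_aestronglyMeasurable hf.norm |>.smul hf

theorem memLp_norm_rpow_sub_two_smul {f : X → F} {r : ℝ} (hr : 2 ≤ r)
    (hf : MemLp f (ENNReal.ofReal r) μ) :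
    MemLp (fun x => ‖f x‖ ^ (r - 2) • f x) (ENNReal.ofReal (r / (r - 1))) μ := by
  have h_norm := hf.norm_rpow_div (ENNReal.ofReal (r - 1))
  rw [ENNReal.toReal_ofReal (by linarith), ← ENNReal.ofReal_div_of_pos (by linarith)] at h_norm
  refine h_norm.mono (aestronglyMeasurable_norm_rpow_smul hf.aestronglyMeasurable (by linarith))
    (.of_forall fun x => le_of_eq ?_)
  rw [norm_smul, Real.norm_of_nonneg (by positivity), Real.norm_of_nonneg (by positivity),
    ← Real.rpow_add_one' (norm_nonneg _) (by linarith)]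
  ring_nf

theorem eLpNorm_rpow_eq_enorm_integral_inner {f : X → F} {r : ℝ} (hr : 2 ≤ r)
    (hf : MemLp f (ENNReal.ofReal r) μ) :
    eLpNorm f (ENNReal.ofReal r) μ ^ r = ‖∫ x, ⟪‖f x‖ ^ (r - 2) • f x, f x⟫ ∂μ‖ₑ := by
  have h_inner (x : X) : ⟪‖f x‖ ^ (r - 2) • f x, f x⟫ = ‖f x‖ ^ r := by
    rw [real_inner_smul_left, real_inner_self_eq_norm_sq, ← Real.rpow_add_natCast' (by positivity)
      (by push_cast; linarith)]
    norm_num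
  simp only [h_inner]
  rw [hf.eLpNorm_eq_integral_rpow_norm (by simp; linarith) ENNReal.ofReal_ne_top,
    ENNReal.toReal_ofReal (by linarith), ENNReal.ofReal_rpow_of_nonneg (by positivity)
    (by linarith), ← Real.rpow_mul (by positivity), inv_mul_cancel₀ (by linarith), Real.rpow_one,
    Real.enorm_of_nonneg (by positivity)]

variable [AddCommGroup X] [MeasurableAdd X] [μ.IsAddRightInvariant]

theorem integral_inner_fwdDiff {h : X} {w v : X → F} (hw : Integrable (fun x => ⟪w x, v x⟫) μ)
    (hw' : Integrable (fun x => ⟪w x, v (x + h)⟫) μ) :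
    ∫ x, ⟪w x, Δ_[h] v x⟫ ∂μ = -∫ x, ⟪Δ_[h] w x, v (x + h)⟫ ∂μ := by
  have hw_shift : Integrable (fun x => ⟪w (x + h), v (x + h)⟫) μ :=
    hw.comp_add_right h
  simp only [fwdDiff, inner_sub_left, inner_sub_right]
  rw [integral_sub hw' hw, integral_sub hw_shift hw',
    integral_add_right_eq_self (fun x => ⟪w x, v x⟫) h, neg_sub]

theorem enorm_integral_inner_fwdDiff_le {h : X} {w v : X → F} {m p r r' : ℝ≥0∞}
    [HolderConjugate m p] [HolderConjugate r' r] (hw : MemLp w r' μ) (hv : MemLp v r μ) :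
    ‖∫ x, ⟪w x, Δ_[h] v x⟫ ∂μ‖ₑ ≤ eLpNorm (Δ_[h] w) m μ * eLpNorm v p μ := by
  have hv_shift := memLp_comp_add_right hv h
  rw [integral_inner_fwdDiff (integrable_inner_of_holderConjugate hw hv)
    (integrable_inner_of_holderConjugate hw hv_shift), enorm_neg]
  calc ‖∫ x, ⟪Δ_[h] w x, v (x + h)⟫ ∂μ‖ₑ
      ≤ eLpNorm (fun x => ⟪Δ_[h] w x, v (x + h)⟫) 1 μ := by
        rw [eLpNorm_one_eq_lintegral_enorm]
        exact enorm_integral_le_lintegral_enorm _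
    _ ≤ (1 : ℝ≥0) * eLpNorm (Δ_[h] w) m μ * eLpNorm (fun x => v (x + h)) p μ :=
        eLpNorm_le_eLpNorm_mul_eLpNorm_of_nnnorm
          (aestronglyMeasurable_fwdDiff_iter hw.aestronglyMeasurable h 1)
          hv_shift.aestronglyMeasurable (fun y z => ⟪y, z⟫) 1
          (.of_forall fun x => by
            simpa using nnnorm_inner_le_nnnorm (𝕜 := ℝ) (Δ_[h] w x) (v (x + h)))
    _ = eLpNorm (Δ_[h] w) m μ * eLpNorm v p μ := by
        rw [eLpNorm_comp_add_right hv.aestronglyMeasurable, ENNReal.coe_one, one_mul]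

theorem eLpNorm_fwdDiff_norm_rpow_smul_le {h : X} {f : X → F} (hf : AEStronglyMeasurable f μ)
    {q : ℝ} (hq : 0 < q) {p s m : ℝ≥0∞} [HolderTriple s p m] (hs : 1 ≤ s) :
    eLpNorm (Δ_[h] fun x => ‖f x‖ ^ q • f x) m μ ≤ 2 * ENNReal.ofReal (q + 1)
      * eLpNorm f (s * ENNReal.ofReal q) μ ^ q * eLpNorm (Δ_[h] f) p μ := by
  have hf_shift := aestronglyMeasurable_comp_add_right hf h
  have h_meas {f : X → F} (hf : AEStronglyMeasurable f μ) :
      AEStronglyMeasurable (fun x => ‖f x‖ ^ q) μ :=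
    (Real.continuous_rpow_const hq.le).comp_aestronglyMeasurable hf.norm
  have h_weight : eLpNorm (fun x => ‖f (x + h)‖ ^ q + ‖f x‖ ^ q) s μ
      ≤ 2 * eLpNorm f (s * ENNReal.ofReal q) μ ^ q := by
    refine (eLpNorm_add_le (h_meas hf_shift) (h_meas hf) hs).trans_eq ?_
    rw [eLpNorm_norm_rpow _ hq, eLpNorm_norm_rpow _ hq, eLpNorm_comp_add_right hf, two_mul]
  calc eLpNorm (Δ_[h] fun x => ‖f x‖ ^ q • f x) m μ
      ≤ eLpNorm (fun x => (q + 1) * (‖f (x + h)‖ ^ q + ‖f x‖ ^ q) * ‖Δ_[h] f x‖) m μ :=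
        eLpNorm_mono_real fun x => norm_rpow_smul_sub_rpow_smul_le hq.le _ _
    _ ≤ ENNReal.ofReal (q + 1) * eLpNorm (fun x => ‖f (x + h)‖ ^ q + ‖f x‖ ^ q) s μ
          * eLpNorm (Δ_[h] f) p μ :=
        eLpNorm_le_eLpNorm_mul_eLpNorm_of_nnnorm ((h_meas hf_shift).add (h_meas hf))
          (aestronglyMeasurable_fwdDiff_iter hf h 1) (fun a y => (q + 1) * a * ‖y‖) (q + 1).toNNReal
          (.of_forall fun x => by
            rw [nnnorm_mul, nnnorm_mul, nnnorm_norm, Real.nnnorm_of_nonneg (by linarith),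
              Real.toNNReal_of_nonneg (by linarith)])
    _ ≤ ENNReal.ofReal (q + 1) * (2 * eLpNorm f (s * ENNReal.ofReal q) μ ^ q)
          * eLpNorm (Δ_[h] f) p μ := by gcongr
    _ = 2 * ENNReal.ofReal (q + 1) * eLpNorm f (s * ENNReal.ofReal q) μ ^ q
          * eLpNorm (Δ_[h] f) p μ := by ring

theorem eLpNorm_fwdDiff_rpow_le {h : X} {v : X → F} {r : ℝ} (hr : 2 < r)
    (hv : MemLp v (ENNReal.ofReal r) μ) {p q : ℝ≥0∞} [HolderTriple p q (ENNReal.ofReal (r / 2))] :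
    eLpNorm (Δ_[h] v) (ENNReal.ofReal r) μ ^ r
      ≤ 2 * ENNReal.ofReal (r - 1) * eLpNorm v p μ * eLpNorm (Δ_[h] ^[2] v) q μ
        * eLpNorm (Δ_[h] v) (ENNReal.ofReal r) μ ^ (r - 2) := by
  have hd : MemLp (Δ_[h] v) (ENNReal.ofReal r) μ := memLp_fwdDiff_iter hv h 1
  have hr₂ : 0 < r - 2 := by linarith
  set s := ENNReal.ofReal (r / (r - 2))
  set m := (s⁻¹ + q⁻¹)⁻¹
  have hs_inv : s⁻¹ = ENNReal.ofReal ((r - 2) / r) := by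
    rw [← ENNReal.ofReal_inv_of_pos (by positivity), inv_div]
  have hs_one : 1 ≤ s := by
    rw [ENNReal.one_le_ofReal, one_le_div hr₂]
    linarith
  have hsr : s * ENNReal.ofReal (r - 2) = ENNReal.ofReal r := by
    rw [← ENNReal.ofReal_mul (by positivity), div_mul_cancel₀ r hr₂.ne']
  have : HolderTriple s q m := ⟨(inv_inv _).symm⟩
  have : HolderConjugate m p := by
    constructor
    have hpq_inv : p⁻¹ + q⁻¹ = ENNReal.ofReal (2 / r) := by
      rw [HolderTriple.inv_add_inv_eq_inv p q (ENNReal.ofReal (r / 2)),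
        ← ENNReal.ofReal_inv_of_pos (by positivity), inv_div]
    rw [inv_inv, add_assoc, add_comm q⁻¹, hpq_inv, hs_inv,
      ← ENNReal.ofReal_add (by positivity) (by positivity), ← add_div, sub_add_cancel,
      div_self (by positivity), ENNReal.ofReal_one, inv_one]
  have : HolderConjugate (ENNReal.ofReal (r / (r - 1))) (ENNReal.ofReal r) :=
    (Real.HolderConjugate.conjExponent (by linarith)).symm.ennrealOfReal
  calc eLpNorm (Δ_[h] v) (ENNReal.ofReal r) μ ^ r
      = ‖∫ x, ⟪‖Δ_[h] v x‖ ^ (r - 2) • Δ_[h] v x, Δ_[h] v x⟫ ∂μ‖ₑ :=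
        eLpNorm_rpow_eq_enorm_integral_inner hr.le hd
    _ ≤ eLpNorm (Δ_[h] fun x => ‖Δ_[h] v x‖ ^ (r - 2) • Δ_[h] v x) m μ * eLpNorm v p μ :=
        enorm_integral_inner_fwdDiff_le (memLp_norm_rpow_sub_two_smul hr.le hd) hv
    _ ≤ 2 * ENNReal.ofReal (r - 2 + 1)
          * eLpNorm (Δ_[h] v) (s * ENNReal.ofReal (r - 2)) μ ^ (r - 2)
          * eLpNorm (Δ_[h] ^[2] v) q μ * eLpNorm v p μ := by
        gcongr
        exact eLpNorm_fwdDiff_norm_rpow_smul_le hd.aestronglyMeasurable hr₂ hs_one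
    _ = 2 * ENNReal.ofReal (r - 1) * eLpNorm v p μ * eLpNorm (Δ_[h] ^[2] v) q μ
          * eLpNorm (Δ_[h] v) (ENNReal.ofReal r) μ ^ (r - 2) := by
        rw [hsr, show r - 2 + 1 = r - 1 by ring]
        ring

theorem eLpNorm_fwdDiff_sq_le {h : X} {v : X → F} {r : ℝ} (hr : 2 < r)
    (hv : MemLp v (ENNReal.ofReal r) μ) {p q : ℝ≥0∞} [HolderTriple p q (ENNReal.ofReal (r / 2))] :
    eLpNorm (Δ_[h] v) (ENNReal.ofReal r) μ ^ 2
      ≤ 2 * ENNReal.ofReal (r - 1) * eLpNorm v p μ * eLpNorm (Δ_[h] ^[2] v) q μ := by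
  have hd : eLpNorm (Δ_[h] v) (ENNReal.ofReal r) μ ≠ ⊤ := (memLp_fwdDiff_iter hv h 1).eLpNorm_ne_top
  rcases eq_or_ne (eLpNorm (Δ_[h] v) (ENNReal.ofReal r) μ) 0 with h_zero | h_ne
  · simp [h_zero]
  refine (ENNReal.mul_le_mul_iff_left ?_ ?_).1 <|
    (eLpNorm_fwdDiff_rpow_le (p := p) (q := q) hr hv).trans_eq' ?_
  · simp [ENNReal.rpow_eq_zero_iff, h_ne, hd]
  · exact ENNReal.rpow_ne_top_of_nonneg (by linarith) hd
  · rw [← ENNReal.rpow_natCast, ← ENNReal.rpow_add _ _ h_ne hd, Nat.cast_ofNat, add_sub_cancel]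

theorem eLpNorm_fwdDiff_iter_succ_sq_le [IsFiniteMeasure μ] {u : X → F} (hu : MemLp u ⊤ μ) (h : X)
    {q : ℝ≥0} (hq : 2 ≤ q) {j k : ℕ} (hjk : j + 2 ≤ k) :
    eLpNorm (Δ_[h] ^[j + 1] u) (k * q / (j + 1 : ℕ)) μ ^ 2
      ≤ (2 * k * q : ℝ≥0) * (eLpNorm (Δ_[h] ^[j] u) (k * q / j) μ
        * eLpNorm (Δ_[h] ^[j + 2] u) (k * q / (j + 2 : ℕ)) μ) := by
  set r : ℝ := k * q / (j + 1 : ℕ)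
  have hq' : (2 : ℝ) ≤ q := mod_cast hq
  have hjk' : (j + 2 : ℝ) ≤ k := mod_cast hjk
  have hr : 2 < r := by
    rw [lt_div_iff₀ (by positivity)]
    push_cast
    nlinarith [mul_le_mul_of_nonneg_left hq' k.cast_nonneg]
  have hr_le : r ≤ k * q := div_le_self (by positivity) (by simp)
  have h_ofReal (m : ℕ) (hm : 0 < m) : (k * q / m : ℝ≥0∞) = ENNReal.ofReal (k * q / m) := by
    rw [ENNReal.ofReal_div_of_pos (mod_cast hm), ENNReal.ofReal_mul (by positivity)]
    simp
  have : HolderTriple (k * q / j : ℝ≥0∞) (k * q / (j + 2 : ℕ)) (ENNReal.ofReal (r / 2)) := by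
    have h_eq : r / 2 = k * q / (j + (j + 2) : ℕ) := by
      rw [div_div]
      push_cast
      ring
    have hkq : (k * q : ℝ≥0∞) ≠ 0 := by
      have : k ≠ 0 := by lia
      have : q ≠ 0 := (two_pos.trans_le hq).ne'
      positivity
    rw [h_eq, ← h_ofReal _ (by lia)]
    exact holderTriple_div_natCast hkq j (j + 2)
  have hv : MemLp (Δ_[h] ^[j] u) (ENNReal.ofReal r) μ :=
    (memLp_fwdDiff_iter hu h j).mono_exponent le_top
  have h_sq := eLpNorm_fwdDiff_sq_le (p := k * q / j) (q := k * q / (j + 2 : ℕ)) (h := h) hr hv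
  rw [← h_ofReal _ j.succ_pos, mul_assoc] at h_sq
  simp only [← Function.iterate_succ_apply', ← Function.iterate_add_apply, add_comm 2 j] at h_sq
  refine h_sq.trans ?_
  gcongr
  calc 2 * ENNReal.ofReal (r - 1) ≤ 2 * ENNReal.ofReal (k * q) := by gcongr; linarith
    _ = (2 * k * q : ℝ≥0) := by
      rw [ENNReal.ofReal_mul (by positivity)]
      simp [mul_assoc]

theorem FwdDiffBound.of_eLpNorm_top_le [IsFiniteMeasure μ] {k : ℕ} (hk : k ≠ 0) {q R : ℝ≥0}
    (hq : 2 ≤ q) {u : X → F} (hu : AEStronglyMeasurable u μ) (huR : eLpNorm u ⊤ μ ≤ R) (h : X) :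
    FwdDiffBound μ h (k * q) (eLpNorm (Δ_[h] ^[k] u) q μ ^ (k⁻¹ : ℝ)) 0 k
      ((2 * k * q) ^ k ^ 2 * max 1 R) u := by
  have hu_top : MemLp u ⊤ μ := ⟨hu, huR.trans_lt ENNReal.coe_lt_top⟩
  have h_ne_top (i : ℕ) (p : ℝ≥0∞) : eLpNorm (Δ_[h] ^[i] u) p μ ≠ ⊤ :=
    ((memLp_fwdDiff_iter hu_top h i).mono_exponent le_top).eLpNorm_ne_top
  have : 0 < q := two_pos.trans_le hq
  have h_exponent : (k * q / k : ℝ≥0∞) = q := by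
    rw [mul_comm, ENNReal.mul_div_cancel_right (by simpa using hk) (by simp)]
  lift eLpNorm (Δ_[h] ^[k] u) q μ to ℝ≥0 using h_ne_top k q with b hb
  set a : ℕ → ℝ≥0 := fun i => (eLpNorm (Δ_[h] ^[i] u) (k * q / i) μ).toNNReal
  have ha (i : ℕ) : (a i : ℝ≥0∞) = eLpNorm (Δ_[h] ^[i] u) (k * q / i) μ :=
    ENNReal.coe_toNNReal (h_ne_top i _)
  refine ⟨hu, fun i hik => ?_⟩
  rw [zero_add, ← ha i, ← ENNReal.coe_rpow_of_nonneg _ (by positivity)]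
  rw [← ENNReal.coe_pow, ← ENNReal.coe_mul, ENNReal.coe_le_coe]
  refine le_mul_pow_of_sq_le_mul hk ?_ (le_max_left 1 R) (fun j hj => ?_) ?_ ?_ hik
  · have : (1 : ℝ≥0) ≤ k := mod_cast Nat.one_le_iff_ne_zero.2 hk
    calc (1 : ℝ≥0) ≤ 2 * 1 * 1 := by norm_num
      _ ≤ 2 * k * q := by gcongr; exact one_le_two.trans hq
  · have := eLpNorm_fwdDiff_iter_succ_sq_le hu_top h hq hj
    rw [← ha, ← ha, ← ha] at this
    exact_mod_cast this
  · refine ENNReal.coe_le_coe.1 (le_trans ?_ (huR.trans (by simp)))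
    rw [ha]
    simp [ENNReal.div_zero (a := k * q) (by positivity)]
  · rw [NNReal.rpow_inv_natCast_pow _ hk, ← ENNReal.coe_inj, ha, h_exponent, hb]

theorem exists_eLpNorm_fwdDiff_iter_comp_le (μ : Measure X) [IsFiniteMeasure μ]
    [μ.IsAddRightInvariant] {V W : Type u} [NormedAddCommGroup V] [InnerProductSpace ℝ V]
    [ProperSpace V] [NormedAddCommGroup W] [NormedSpace ℝ W] [CompleteSpace W] {k : ℕ} (hk : k ≠ 0)
    {G : V → W} (hG : ContDiff ℝ k G) {q : ℝ≥0} (hq : 2 ≤ q) (R : ℝ≥0) :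
    ∃ C : ℝ≥0, ∀ (h : X) (u : X → V), AEStronglyMeasurable u μ → eLpNorm u ⊤ μ ≤ R →
      eLpNorm (Δ_[h] ^[k] fun x => G (u x)) q μ ≤ C * eLpNorm (Δ_[h] ^[k] u) q μ := by
  have : q ≠ 0 := (two_pos.trans_le hq).ne'
  have hk_le : (k : ℝ≥0∞) ≤ k * q :=
    le_mul_of_one_le_right' (mod_cast one_le_two.trans hq)
  obtain ⟨C, hC⟩ := FwdDiffBound.exists_comp_contDiff μ hG (p := k * q) (by positivity) hk_le
    ((2 * k * q) ^ k ^ 2 * max 1 R)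
  refine ⟨C, fun h u hu huR => ?_⟩
  have h_bound := (hC h _ u (.of_eLpNorm_top_le hk hq hu huR h)).eLpNorm_le k le_rfl
  rwa [zero_add, mul_comm (k : ℝ≥0∞), ENNReal.mul_div_cancel_right (by simpa using hk) (by simp),
    ← ENNReal.rpow_mul_natCast, inv_mul_cancel₀ (by simpa using hk), ENNReal.rpow_one] at h_bound

end GagliardoNirenberg

section FourierSeries

open AddCircle (haarAddCircle)

variable {T : ℝ} [Fact (0 < T)]

theorem eLpNorm_two_sq_eq_lintegral {X E : Type*} [MeasurableSpace X] [NormedAddCommGroup E]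
    (f : X → E) (μ : Measure X) : eLpNorm f 2 μ ^ 2 = ∫⁻ x, ‖f x‖ₑ ^ 2 ∂μ := by
  simpa using eLpNorm_nnreal_pow_eq_lintegral (p := 2) (f := f) (μ := μ) two_ne_zero

theorem tsum_enorm_sq_fourierCoeff {f : AddCircle T → ℂ} (hf : MemLp f 2 haarAddCircle) :
    ∑' l, ‖fourierCoeff f l‖ₑ ^ 2 = eLpNorm f 2 haarAddCircle ^ 2 := by
  have h_sum := hasSum_sq_fourierCoeff (hf.toLp f)
  rw [fourierCoeff_congr_ae hf.coeFn_toLp] at h_sum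
  have h_norm : ∫ t, ‖hf.toLp f t‖ ^ 2 ∂haarAddCircle = ∫ t, ‖f t‖ ^ 2 ∂haarAddCircle :=
    integral_congr_ae (hf.coeFn_toLp.fun_comp (‖·‖ ^ 2))
  rw [h_norm] at h_sum
  calc ∑' l, ‖fourierCoeff f l‖ₑ ^ 2 = ∑' l, ENNReal.ofReal (‖fourierCoeff f l‖ ^ 2) := by
        simp only [ENNReal.ofReal_pow (norm_nonneg _), ofReal_norm]
    _ = ENNReal.ofReal (∫ t, ‖f t‖ ^ 2 ∂haarAddCircle) := by
        rw [← ENNReal.ofReal_tsum_of_nonneg (fun _ => sq_nonneg _) h_sum.summable, h_sum.tsum_eq]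
    _ = ∫⁻ t, ‖f t‖ₑ ^ 2 ∂haarAddCircle := by
        rw [ofReal_integral_eq_lintegral_ofReal hf.integrable_norm_pow'
          (.of_forall fun _ => sq_nonneg _)]
        simp only [ENNReal.ofReal_pow (norm_nonneg _), ofReal_norm]
    _ = eLpNorm f 2 haarAddCircle ^ 2 := (eLpNorm_two_sq_eq_lintegral f _).symm

theorem fourierCoeff_comp_add_right {E : Type*} [NormedAddCommGroup E] [NormedSpace ℂ E]
    (f : AddCircle T → E) (h : AddCircle T) (l : ℤ) :
    fourierCoeff (fun x => f (x + h)) l = fourier l h • fourierCoeff f l := by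
  have h_char (x : AddCircle T) : (fourier (-l) x : ℂ) = fourier l h * fourier (-l) (x + h) := by
    simp only [fourier_apply, ← Circle.coe_mul, ← AddCircle.toCircle_add]
    congr 2
    simp only [smul_add, neg_smul]
    abel
  calc fourierCoeff (fun x => f (x + h)) l
      = ∫ x, (fourier l h : ℂ) • (fourier (-l) (x + h) : ℂ) • f (x + h) ∂haarAddCircle := by
        exact integral_congr_ae (.of_forall fun x => by simp only [h_char x, mul_smul])
    _ = fourier l h • fourierCoeff f l := by
        rw [integral_smul, integral_add_right_eq_self (fun x => (fourier (-l) x : ℂ) • f x) h]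
        rfl

theorem fourierCoeff_fwdDiff_iter {E : Type*} [NormedAddCommGroup E] [NormedSpace ℂ E]
    {f : AddCircle T → E} (hf : MemLp f 1 haarAddCircle) (h : AddCircle T) (k : ℕ) (l : ℤ) :
    fourierCoeff (Δ_[h] ^[k] f) l = (fourier l h - 1 : ℂ) ^ k • fourierCoeff f l := by
  induction k generalizing f with
  | zero => simp
  | succ k ih =>
    have h_diff : MemLp (Δ_[h] f) 1 haarAddCircle := memLp_fwdDiff_iter hf h 1
    have h_add : fourierCoeff (fun x => f (x + h)) l =
        fourierCoeff (Δ_[h] f) l + fourierCoeff f l := by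
      rw [← Pi.add_apply, ← fourierCoeff.add (memLp_one_iff_integrable.1 h_diff)
        (memLp_one_iff_integrable.1 hf)]
      exact congrArg (fourierCoeff · l) (funext fun x => (sub_add_cancel (f (x + h)) (f x)).symm)
    rw [Function.iterate_succ_apply, ih h_diff, eq_sub_of_add_eq h_add.symm,
      fourierCoeff_comp_add_right, pow_succ, mul_smul, sub_smul, one_smul]

theorem eLpNorm_fwdDiff_iter_two_sq {f : AddCircle T → ℂ} (hf : MemLp f 2 haarAddCircle)
    (h : AddCircle T) (k : ℕ) :
    eLpNorm (Δ_[h] ^[k] f) 2 haarAddCircle ^ 2 =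
      ∑' l, ‖(fourier l h - 1 : ℂ)‖ₑ ^ (2 * k) * ‖fourierCoeff f l‖ₑ ^ 2 := by
  rw [← tsum_enorm_sq_fourierCoeff (memLp_fwdDiff_iter hf h k)]
  refine tsum_congr fun l => ?_
  rw [fourierCoeff_fwdDiff_iter (hf.mono_exponent one_le_two), smul_eq_mul, enorm_mul, enorm_pow,
    mul_pow, ← pow_mul, mul_comm k]

end FourierSeries

section DifferenceWeight

theorem lintegral_comp_mul_left_mul_rpow (F : ℝ → ℝ≥0∞) {a : ℝ} (ha : a ≠ 0) (r : ℝ) :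
    ∫⁻ h, F (a * h) * ENNReal.ofReal (|h| ^ r) =
      ENNReal.ofReal (|a| ^ (-1 - r)) * ∫⁻ t, F t * ENNReal.ofReal (|t| ^ r) := by
  have h_abs : 0 < |a| := abs_pos.2 ha
  have h_pointwise (h : ℝ) : F (a * h) * ENNReal.ofReal (|h| ^ r) =
      ENNReal.ofReal (|a| ^ (-r)) * (F (a * h) * ENNReal.ofReal (|a * h| ^ r)) := by
    rw [abs_mul, Real.mul_rpow h_abs.le (abs_nonneg h), mul_left_comm,
      ← ENNReal.ofReal_mul (by positivity), ← mul_assoc, ← Real.rpow_add h_abs, neg_add_cancel,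
      Real.rpow_zero, one_mul]
  have h_scale (Φ : ℝ → ℝ≥0∞) : ∫⁻ h, Φ (a * h) = ENNReal.ofReal |a⁻¹| * ∫⁻ t, Φ t := by
    rw [← smul_eq_mul, ← lintegral_smul_measure, ← Real.map_volume_mul_left ha]
    exact ((Homeomorph.mulLeft₀ a ha).measurableEmbedding.lintegral_map Φ).symm
  simp only [h_pointwise]
  rw [lintegral_const_mul' _ _ ENNReal.ofReal_ne_top,
    h_scale fun t => F t * ENNReal.ofReal (|t| ^ r), ← mul_assoc,
    ← ENNReal.ofReal_mul (by positivity), abs_inv, ← Real.rpow_neg_one, ← Real.rpow_add h_abs]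
  congr 3
  ring

/-- The constant relating the squared `L²` norms of the `k`-th differences `Δ_[h] ^[k] f`, averaged
over all steps `h ∈ ℝ` with weight `|h| ^ (-1 - 2 * s)`, to the homogeneous Sobolev seminorm of
order `s`. -/
noncomputable def differenceWeight (k : ℕ) (s : ℝ) : ℝ≥0∞ :=
  ∫⁻ t : ℝ, ‖Complex.exp (Complex.I * t) - 1‖ₑ ^ (2 * k) * ENNReal.ofReal (|t| ^ (-1 - 2 * s))

variable {k : ℕ} {s : ℝ}

theorem differenceWeight_ne_zero : differenceWeight k s ≠ 0 := by
  rw [differenceWeight, ← pos_iff_ne_zero, lintegral_pos_iff_support (by fun_prop)]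
  refine lt_of_lt_of_le (b := volume (Set.Ioo (0 : ℝ) 1)) (by simp) (measure_mono fun t ht => ?_)
  have h_sin : 0 < Real.sin (t / 2) :=
    Real.sin_pos_of_pos_of_lt_pi (half_pos ht.1) (by linarith [ht.2, Real.pi_gt_three])
  have h_exp : Complex.exp (Complex.I * t) - 1 ≠ 0 := by
    rw [← norm_ne_zero_iff, Complex.norm_exp_I_mul_ofReal_sub_one]
    simpa using h_sin.ne'
  have h_rpow : 0 < |t| ^ (-1 - 2 * s) := Real.rpow_pos_of_pos (abs_pos.2 ht.1.ne') _
  exact mul_ne_zero (pow_ne_zero _ (enorm_ne_zero.2 h_exp)) (ENNReal.ofReal_pos.2 h_rpow).ne'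

theorem integrable_min_pow_mul_rpow_norm (hs : 0 < s) (hsk : s < k) {M : ℝ} (hM : 0 ≤ M) :
    Integrable fun t : ℝ => ‖t‖ ^ (-1 - 2 * s) * min (‖t‖ ^ (2 * k)) M := by
  rw [integrable_fun_norm_addHaar volume (f := fun r => r ^ (-1 - 2 * s) * min (r ^ (2 * k)) M)]
  simp only [Module.finrank_self, tsub_self, pow_zero, one_smul]
  have h_atTop : (fun r : ℝ => min (r ^ (2 * k)) M) =O[atTop] fun r => r ^ (-0 : ℝ) := by
    refine .of_bound M ?_
    filter_upwards [eventually_ge_atTop 0] with r hr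
    rw [neg_zero, Real.rpow_zero, norm_one, mul_one, Real.norm_of_nonneg (by positivity)]
    exact min_le_right _ _
  have h_zero : (fun r : ℝ => min (r ^ (2 * k)) M) =O[𝓝[>] 0]
      fun r => r ^ (- -((2 * k : ℕ) : ℝ)) := by
    refine .of_bound 1 ?_
    filter_upwards [self_mem_nhdsWithin] with r (hr : 0 < r)
    rw [Real.norm_of_nonneg (by positivity), Real.norm_of_nonneg (by positivity), one_mul,
      neg_neg, Real.rpow_natCast]
    exact min_le_left _ _
  convert mellin_convergent_of_isBigO_scalar (s := -2 * s) ?_ h_atTop (by linarith) h_zero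
    (by push_cast; linarith) using 4
  · ring
  · exact (by fun_prop : Continuous fun r : ℝ => min (r ^ (2 * k)) M).locallyIntegrable
      |>.locallyIntegrableOn _

theorem differenceWeight_ne_top (hs : 0 < s) (hsk : s < k) : differenceWeight k s ≠ ⊤ := by
  have h_integrable := integrable_min_pow_mul_rpow_norm hs hsk (M := 2 ^ (2 * k)) (by positivity)
  refine ne_top_of_le_ne_top h_integrable.lintegral_lt_top.ne (lintegral_mono fun t => ?_)
  rw [mul_comm, ENNReal.ofReal_mul (by positivity), Real.norm_eq_abs]
  gcongr
  rw [← ofReal_norm, ← ENNReal.ofReal_pow (norm_nonneg _)]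
  gcongr
  refine le_min (pow_le_pow_left₀ (norm_nonneg _) Real.norm_exp_I_mul_ofReal_sub_one_le _)
    (pow_le_pow_left₀ (norm_nonneg _) ?_ _)
  calc ‖Complex.exp (Complex.I * t) - 1‖ ≤ ‖Complex.exp (Complex.I * t)‖ + ‖(1 : ℂ)‖ :=
        norm_sub_le _ _
    _ = 2 := by
        rw [mul_comm, Complex.norm_exp_ofReal_mul_I, norm_one]
        norm_num

theorem lintegral_enorm_exp_sub_one_pow_mul_rpow (hs : s ≠ 0) (hk : k ≠ 0) (a : ℝ) :
    ∫⁻ h : ℝ, ‖Complex.exp (Complex.I * (a * h : ℝ)) - 1‖ₑ ^ (2 * k) *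
        ENNReal.ofReal (|h| ^ (-1 - 2 * s)) =
      ENNReal.ofReal (|a| ^ (2 * s)) * differenceWeight k s := by
  rcases eq_or_ne a 0 with rfl | ha
  · simp [hk, Real.zero_rpow, hs]
  · rw [lintegral_comp_mul_left_mul_rpow
      (fun t => ‖Complex.exp (Complex.I * t) - 1‖ₑ ^ (2 * k)) ha, differenceWeight]
    congr 3
    ring

end DifferenceWeight

section SobolevNorm

open AddCircle (haarAddCircle)

variable {T : ℝ} [Fact (0 < T)] {s : ℝ}

/-- The square of the homogeneous Sobolev seminorm of order `s` of a function on the circle. -/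
noncomputable def sobolevEnergy (T : ℝ) [Fact (0 < T)] (s : ℝ) (f : AddCircle T → ℂ) : ℝ≥0∞ :=
  ∑' l : ℤ, ENNReal.ofReal (|2 * π * l / T| ^ (2 * s)) * ‖fourierCoeff f l‖ₑ ^ 2

theorem lintegral_eLpNorm_fwdDiff_iter_sq {k : ℕ} (hs : s ≠ 0) (hk : k ≠ 0) {f : AddCircle T → ℂ}
    (hf : MemLp f 2 haarAddCircle) :
    ∫⁻ h : ℝ, eLpNorm (Δ_[(h : AddCircle T)] ^[k] f) 2 haarAddCircle ^ 2 *
        ENNReal.ofReal (|h| ^ (-1 - 2 * s)) =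
      differenceWeight k s * sobolevEnergy T s f := by
  have h_fourier (l : ℤ) (h : ℝ) : (fourier l (h : AddCircle T) : ℂ) =
      Complex.exp (Complex.I * (2 * π * l / T * h : ℝ)) := by
    rw [fourier_coe_apply]
    push_cast
    ring_nf
  calc ∫⁻ h : ℝ, eLpNorm (Δ_[(h : AddCircle T)] ^[k] f) 2 haarAddCircle ^ 2 *
        ENNReal.ofReal (|h| ^ (-1 - 2 * s))
      = ∫⁻ h : ℝ, ∑' l : ℤ, ‖fourierCoeff f l‖ₑ ^ 2 *
          (‖Complex.exp (Complex.I * (2 * π * l / T * h : ℝ)) - 1‖ₑ ^ (2 * k) *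
            ENNReal.ofReal (|h| ^ (-1 - 2 * s))) := by
        refine lintegral_congr fun h => ?_
        rw [eLpNorm_fwdDiff_iter_two_sq hf, ← ENNReal.tsum_mul_right]
        refine tsum_congr fun l => ?_
        rw [h_fourier]
        ring
    _ = ∑' l : ℤ, ‖fourierCoeff f l‖ₑ ^ 2 *
          (ENNReal.ofReal (|2 * π * l / T| ^ (2 * s)) * differenceWeight k s) := by
        rw [lintegral_tsum fun l => by fun_prop]
        refine tsum_congr fun l => ?_
        rw [lintegral_const_mul _ (by fun_prop), lintegral_enorm_exp_sub_one_pow_mul_rpow hs hk]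
    _ = differenceWeight k s * sobolevEnergy T s f := by
        rw [sobolevEnergy, ← ENNReal.tsum_mul_left]
        exact tsum_congr fun l => by ring

/-- The Sobolev norm of order `s` of a function on the circle, with values in `ℝ≥0∞` so that it is
`⊤` for integrable functions outside of the Sobolev space. -/
noncomputable def sobolevENorm (T : ℝ) [Fact (0 < T)] (s : ℝ) (f : AddCircle T → ℂ) : ℝ≥0∞ :=
  eLpNorm (fun l : ℤ => (1 + (2 * π * l / T) ^ 2) ^ (s / 2) • fourierCoeff f l) 2 Measure.count

theorem sobolevENorm_add_le {f g : AddCircle T → ℂ} (hf : Integrable f haarAddCircle)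
    (hg : Integrable g haarAddCircle) :
    sobolevENorm T s (f + g) ≤ sobolevENorm T s f + sobolevENorm T s g := by
  simp only [sobolevENorm, fourierCoeff.add hf hg, Pi.add_apply, smul_add]
  exact eLpNorm_add_le .of_discrete .of_discrete one_le_two

theorem sobolevSummand_nonneg (f : AddCircle T → ℂ) (l : ℤ) : 0 ≤ sobolevSummand T s f l := by
  unfold sobolevSummand
  positivity

theorem ofReal_sobolevSummand (f : AddCircle T → ℂ) (l : ℤ) :
    ENNReal.ofReal (sobolevSummand T s f l) =
      ENNReal.ofReal ((1 + (2 * π * l / T) ^ 2) ^ s) * ‖fourierCoeff f l‖ₑ ^ 2 := by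
  rw [sobolevSummand, ENNReal.ofReal_mul (by positivity), ENNReal.ofReal_pow (norm_nonneg _),
    ofReal_norm]

theorem sobolevENorm_sq (f : AddCircle T → ℂ) :
    sobolevENorm T s f ^ 2 = ∑' l, ENNReal.ofReal (sobolevSummand T s f l) := by
  rw [sobolevENorm, eLpNorm_two_sq_eq_lintegral, lintegral_count]
  refine tsum_congr fun l => ?_
  have h_weight : ((1 + (2 * π * l / T) ^ 2) ^ (s / 2)) ^ 2 = (1 + (2 * π * l / T) ^ 2) ^ s := by
    rw [← Real.rpow_mul_natCast (by positivity)]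
    norm_num
  rw [ofReal_sobolevSummand, enorm_smul, mul_pow, Real.enorm_of_nonneg (by positivity),
    ← ENNReal.ofReal_pow (by positivity), h_weight]

theorem sobolevENorm_ne_top_iff {f : AddCircle T → ℂ} :
    sobolevENorm T s f ≠ ⊤ ↔ Summable (sobolevSummand T s f) := by
  have h_sq : sobolevENorm T s f ≠ ⊤ ↔ sobolevENorm T s f ^ 2 ≠ ⊤ := by
    simp
  rw [h_sq, sobolevENorm_sq]
  refine ⟨fun h => ?_, Summable.tsum_ofReal_ne_top⟩
  simpa only [ENNReal.toReal_ofReal (sobolevSummand_nonneg f _)] using ENNReal.summable_toReal h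

theorem toReal_sobolevENorm (f : AddCircle T → ℂ) :
    (sobolevENorm T s f).toReal = √(∑' l, sobolevSummand T s f l) := by
  rw [← Real.sqrt_sq ENNReal.toReal_nonneg, ← ENNReal.toReal_pow, sobolevENorm_sq,
    ENNReal.tsum_toReal_eq fun _ => ENNReal.ofReal_ne_top]
  simp only [ENNReal.toReal_ofReal (sobolevSummand_nonneg f _)]

theorem summable_and_sqrt_tsum_le_of_sobolevENorm_le {f f₀ u : AddCircle T → ℂ} {C : ℝ≥0}
    (hf₀ : Summable (sobolevSummand T s f₀)) (hu : Summable (sobolevSummand T s u))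
    (h : sobolevENorm T s f ≤ sobolevENorm T s f₀ + C * sobolevENorm T s u) :
    Summable (sobolevSummand T s f) ∧ √(∑' l, sobolevSummand T s f l) ≤
      √(∑' l, sobolevSummand T s f₀ l) + C * √(∑' l, sobolevSummand T s u l) := by
  have hf₀_ne_top := sobolevENorm_ne_top_iff.2 hf₀
  have hu_ne_top : C * sobolevENorm T s u ≠ ⊤ :=
    ENNReal.mul_ne_top ENNReal.coe_ne_top (sobolevENorm_ne_top_iff.2 hu)
  have h_ne_top := ENNReal.add_ne_top.2 ⟨hf₀_ne_top, hu_ne_top⟩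
  refine ⟨sobolevENorm_ne_top_iff.1 (ne_top_of_le_ne_top h_ne_top h), ?_⟩
  have h_toReal := ENNReal.toReal_mono h_ne_top h
  rwa [ENNReal.toReal_add hf₀_ne_top hu_ne_top, ENNReal.toReal_mul, ENNReal.coe_toReal,
    toReal_sobolevENorm, toReal_sobolevENorm, toReal_sobolevENorm] at h_toReal

theorem summable_sobolevSummand_const (c : ℂ) : Summable (sobolevSummand T s fun _ => c) := by
  have h_coeff : fourierCoeff (fun _ : AddCircle T => c) = Pi.single 0 c := by
    ext l
    have := fourierCoeff.const_mul (T := T) (fourier 0) c l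
    simpa [fourierCoeff_fourier, Pi.single_apply] using this
  refine summable_of_ne_finset_zero (s := {0}) fun l hl => ?_
  rw [sobolevSummand, h_coeff, Pi.single_eq_of_ne (by simpa using hl)]
  simp

theorem one_add_sq_rpow_le (hs : 0 ≤ s) (a : ℝ) :
    (1 + a ^ 2) ^ s ≤ 2 ^ s * (1 + |a| ^ (2 * s)) := by
  rw [Real.rpow_mul (abs_nonneg a), Real.rpow_two, sq_abs]
  rcases le_total (a ^ 2) 1 with ha | ha
  · calc (1 + a ^ 2) ^ s ≤ (2 * 1) ^ s := by gcongr; linarith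
      _ ≤ 2 ^ s * (1 + (a ^ 2) ^ s) := by
        rw [mul_one]
        exact le_mul_of_one_le_right (by positivity) (le_add_of_nonneg_right (by positivity))
  · calc (1 + a ^ 2) ^ s ≤ (2 * a ^ 2) ^ s := by gcongr; linarith
      _ ≤ 2 ^ s * (1 + (a ^ 2) ^ s) := by
        rw [Real.mul_rpow zero_le_two (sq_nonneg a)]
        gcongr
        exact le_add_of_nonneg_left zero_le_one

theorem abs_rpow_le_one_add_sq_rpow (hs : 0 ≤ s) (a : ℝ) : |a| ^ (2 * s) ≤ (1 + a ^ 2) ^ s := by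
  rw [Real.rpow_mul (abs_nonneg a), Real.rpow_two, sq_abs]
  gcongr
  linarith

theorem sobolevENorm_sq_le (hs : 0 ≤ s) {f : AddCircle T → ℂ} (hf : MemLp f 2 haarAddCircle) :
    sobolevENorm T s f ^ 2 ≤
      ENNReal.ofReal (2 ^ s) * (eLpNorm f 2 haarAddCircle ^ 2 + sobolevEnergy T s f) := by
  rw [sobolevENorm_sq, ← tsum_enorm_sq_fourierCoeff hf, sobolevEnergy, ← ENNReal.tsum_add,
    ← ENNReal.tsum_mul_left]
  refine ENNReal.tsum_le_tsum fun l => ?_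
  rw [ofReal_sobolevSummand, ← one_add_mul, ← mul_assoc, ← ENNReal.ofReal_one,
    ← ENNReal.ofReal_add zero_le_one (by positivity), ← ENNReal.ofReal_mul (by positivity)]
  gcongr
  exact one_add_sq_rpow_le hs _

theorem eLpNorm_sq_le_sobolevENorm_sq (hs : 0 ≤ s) {f : AddCircle T → ℂ}
    (hf : MemLp f 2 haarAddCircle) :
    eLpNorm f 2 haarAddCircle ^ 2 ≤ sobolevENorm T s f ^ 2 := by
  rw [sobolevENorm_sq, ← tsum_enorm_sq_fourierCoeff hf]
  refine ENNReal.tsum_le_tsum fun l => ?_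
  rw [ofReal_sobolevSummand]
  refine le_mul_of_one_le_left' (ENNReal.one_le_ofReal.2 (Real.one_le_rpow ?_ hs))
  linarith [sq_nonneg (2 * π * l / T)]

theorem sobolevEnergy_le_sobolevENorm_sq (hs : 0 ≤ s) (f : AddCircle T → ℂ) :
    sobolevEnergy T s f ≤ sobolevENorm T s f ^ 2 := by
  rw [sobolevENorm_sq]
  refine ENNReal.tsum_le_tsum fun l => ?_
  rw [ofReal_sobolevSummand]
  gcongr
  exact abs_rpow_le_one_add_sq_rpow hs _

section DifferenceDomination

variable {k : ℕ} {C : ℝ≥0} {f u : AddCircle T → ℂ}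

theorem sobolevEnergy_le_of_eLpNorm_fwdDiff_iter_le (hs : 0 < s) (hsk : s < k)
    (hf : MemLp f 2 haarAddCircle) (hu : MemLp u 2 haarAddCircle)
    (h_diff : ∀ h : AddCircle T, eLpNorm (Δ_[h] ^[k] f) 2 haarAddCircle ≤
      C * eLpNorm (Δ_[h] ^[k] u) 2 haarAddCircle) :
    sobolevEnergy T s f ≤ C ^ 2 * sobolevEnergy T s u := by
  have hk : k ≠ 0 := Nat.cast_ne_zero.1 (hs.trans hsk).ne'
  rw [← ENNReal.mul_le_mul_iff_right differenceWeight_ne_zero (differenceWeight_ne_top hs hsk),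
    mul_left_comm, ← lintegral_eLpNorm_fwdDiff_iter_sq hs.ne' hk hf,
    ← lintegral_eLpNorm_fwdDiff_iter_sq hs.ne' hk hu, ← lintegral_const_mul' _ _ (by simp)]
  refine lintegral_mono fun h => ?_
  rw [← mul_assoc, ← mul_pow]
  gcongr
  exact h_diff h

theorem sobolevENorm_le_of_eLpNorm_fwdDiff_iter_le (hs : 0 < s) (hsk : s < k)
    (hf : MemLp f 2 haarAddCircle) (hu : MemLp u 2 haarAddCircle)
    (h_norm : eLpNorm f 2 haarAddCircle ≤ C * eLpNorm u 2 haarAddCircle)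
    (h_diff : ∀ h : AddCircle T, eLpNorm (Δ_[h] ^[k] f) 2 haarAddCircle ≤
      C * eLpNorm (Δ_[h] ^[k] u) 2 haarAddCircle) :
    sobolevENorm T s f ≤ ENNReal.ofReal (2 ^ ((s + 1) / 2)) * C * sobolevENorm T s u := by
  have h_const : ENNReal.ofReal (2 ^ ((s + 1) / 2)) ^ 2 = ENNReal.ofReal (2 ^ s) * 2 := by
    rw [← ENNReal.ofReal_pow (by positivity), ← Real.rpow_mul_natCast zero_le_two, Nat.cast_ofNat,
      div_mul_cancel₀ _ two_ne_zero, Real.rpow_add_one two_ne_zero,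
      ENNReal.ofReal_mul (by positivity), ENNReal.ofReal_ofNat]
  rw [← ENNReal.pow_le_pow_left_iff two_ne_zero]
  calc sobolevENorm T s f ^ 2
      ≤ ENNReal.ofReal (2 ^ s) * (eLpNorm f 2 haarAddCircle ^ 2 + sobolevEnergy T s f) :=
        sobolevENorm_sq_le hs.le hf
    _ ≤ ENNReal.ofReal (2 ^ s) * ((C * eLpNorm u 2 haarAddCircle) ^ 2 +
          C ^ 2 * sobolevEnergy T s u) := by
        gcongr
        exact sobolevEnergy_le_of_eLpNorm_fwdDiff_iter_le hs hsk hf hu h_diff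
    _ = ENNReal.ofReal (2 ^ s) * (C ^ 2 * (eLpNorm u 2 haarAddCircle ^ 2 +
          sobolevEnergy T s u)) := by
        rw [mul_pow, mul_add (C ^ 2 : ℝ≥0∞)]
    _ ≤ ENNReal.ofReal (2 ^ s) * (C ^ 2 * (sobolevENorm T s u ^ 2 + sobolevENorm T s u ^ 2)) := by
        gcongr _ * (_ * ?_)
        exact add_le_add (eLpNorm_sq_le_sobolevENorm_sq hs.le hu)
          (sobolevEnergy_le_sobolevENorm_sq hs.le u)
    _ = (ENNReal.ofReal (2 ^ ((s + 1) / 2)) * C * sobolevENorm T s u) ^ 2 := by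
        rw [mul_pow, mul_pow, h_const]
        ring

end DifferenceDomination

end SobolevNorm

section Composition

open AddCircle (haarAddCircle)

variable (T : ℝ) [Fact (0 < T)] {s : ℝ} {k : ℕ} {g : ℂ → ℂ}

theorem exists_sobolevENorm_comp_sub_le (hs : 0 < s) (hsk : s < k) (hg : ContDiff ℝ k g)
    (R : ℝ≥0) :
    ∃ C : ℝ≥0, ∀ u : AddCircle T → ℂ, AEStronglyMeasurable u haarAddCircle →
      eLpNorm u ⊤ haarAddCircle ≤ R →
      sobolevENorm T s (fun x => g (u x) - g 0) ≤ C * sobolevENorm T s u := by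
  have hk : k ≠ 0 := Nat.cast_ne_zero.1 (hs.trans hsk).ne'
  have hg_lip : LocallyLipschitz g :=
    (hg.of_le (mod_cast Nat.one_le_iff_ne_zero.2 hk : (1 : WithTop ℕ∞) ≤ k)).locallyLipschitz
  obtain ⟨C₀, hC₀⟩ := exists_eLpNorm_comp_sub_le (haarAddCircle (T := T)) hg_lip 2 R
  obtain ⟨C₁, hC₁⟩ := exists_eLpNorm_fwdDiff_iter_comp_le (haarAddCircle (T := T)) hk
    (hg.sub contDiff_const : ContDiff ℝ k fun z => g z - g 0) le_rfl R
  refine ⟨(2 ^ ((s + 1) / 2) : ℝ).toNNReal * max C₀ C₁, fun u hu huR => ?_⟩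
  have hu_two : MemLp u 2 haarAddCircle :=
    memLp_comp_of_eLpNorm_top_le continuous_id 2 hu huR
  have hgu_two : MemLp (fun x => g (u x) - g 0) 2 haarAddCircle :=
    memLp_comp_of_eLpNorm_top_le (hg.continuous.sub continuous_const) 2 hu huR
  rw [ENNReal.coe_mul]
  refine sobolevENorm_le_of_eLpNorm_fwdDiff_iter_le hs hsk hgu_two hu_two
    ((hC₀ u huR).trans ?_) fun h => (hC₁ h u hu huR).trans ?_
  · gcongr
    exact le_max_left C₀ C₁
  · gcongr
    · exact le_max_right C₀ C₁
    · rfl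

theorem exists_monotone_sobolevENorm_comp_le (hs : 0 < s) (hsk : s < k) (hg : ContDiff ℝ k g) :
    ∃ χ : ℝ → ℝ≥0, Monotone χ ∧ ∀ (u : AddCircle T → ℂ) (r : ℝ),
      AEStronglyMeasurable u haarAddCircle → (∀ᵐ x ∂haarAddCircle, ‖u x‖ ≤ r) →
      sobolevENorm T s (fun x => g (u x)) ≤
        sobolevENorm T s (fun _ => g 0) + χ r * sobolevENorm T s u := by
  choose C hC using exists_sobolevENorm_comp_sub_le T hs hsk hg
  refine ⟨fun r => partialSups (fun n : ℕ => C n) ⌈r⌉₊,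
    (partialSups _).monotone.comp Nat.ceil_mono, fun u r hu hur => ?_⟩
  have hu_norm : eLpNorm u ⊤ haarAddCircle ≤ (⌈r⌉₊ : ℝ≥0) := by
    rw [eLpNorm_exponent_top]
    exact eLpNormEssSup_le_of_ae_nnnorm_bound (hur.mono fun x hx => hx.trans (Nat.le_ceil r))
  have h_sub : Integrable (fun x => g (u x) - g 0) haarAddCircle := memLp_one_iff_integrable.1
    (memLp_comp_of_eLpNorm_top_le (hg.continuous.sub continuous_const) 1 hu hu_norm)
  calc sobolevENorm T s (fun x => g (u x))
      = sobolevENorm T s ((fun _ => g 0) + fun x => g (u x) - g 0) :=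
        congrArg _ (funext fun x => (add_sub_cancel (g 0) (g (u x))).symm)
    _ ≤ sobolevENorm T s (fun _ => g 0) + sobolevENorm T s (fun x => g (u x) - g 0) :=
        sobolevENorm_add_le (integrable_const _) h_sub
    _ ≤ sobolevENorm T s (fun _ => g 0) + C ⌈r⌉₊ * sobolevENorm T s u := by
        gcongr
        exact hC _ u hu hu_norm
    _ ≤ _ := by
        gcongr
        exact le_partialSups (fun n : ℕ => C n) ⌈r⌉₊

end Composition

theorem stmt13_general (T : ℝ) [Fact (0 < T)] {s : ℝ} {k : ℕ} (hs : 0 < s) (hsk : s < k)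
    {g : ℂ → ℂ} (hg : ContDiff ℝ k g) :
    ∃ χ : ℝ → ℝ, Monotone χ ∧ (∀ r, 0 ≤ χ r) ∧
      ∀ (u : AddCircle T → ℂ) (r : ℝ), AEStronglyMeasurable u AddCircle.haarAddCircle →
        (∀ᵐ x ∂AddCircle.haarAddCircle, ‖u x‖ ≤ r) → Summable (sobolevSummand T s u) →
        Summable (sobolevSummand T s fun x => g (u x)) ∧
        √(∑' l, sobolevSummand T s (fun x => g (u x)) l) ≤
          √(∑' l, sobolevSummand T s (fun _ => g 0) l) + χ r * √(∑' l, sobolevSummand T s u l) := by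
  obtain ⟨χ, h_mono, h_bound⟩ := exists_monotone_sobolevENorm_comp_le T hs hsk hg
  refine ⟨fun r => χ r, NNReal.coe_mono.comp h_mono, fun r => (χ r).coe_nonneg,
    fun u r hu hur h_summable => ?_⟩
  exact summable_and_sqrt_tsum_le_of_sobolevENorm_le (summable_sobolevSummand_const (g 0))
    h_summable (h_bound u r hu hur)

/-- Moser-type composition estimate: for smooth `g` and `s > 1/2`, there is a
nondecreasing `χ_g` with `‖g(u)‖_s ≤ ‖g(0)‖_s + χ_g(‖u‖_{L^∞}) ‖u‖_s`. -/
theorem stmt13 (T : ℝ) [hT : Fact (0 < T)] (s : ℝ) (hs : 1/2 < s)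
    (g : ℂ → ℂ) (hg : ContDiff ℝ (⊤ : ℕ∞) g) :
    ∃ χ : ℝ → ℝ, Monotone χ ∧ (∀ r, 0 ≤ χ r) ∧
      ∀ u : AddCircle T → ℂ, Continuous u → Summable (sobolevSummand T s u) →
        Summable (sobolevSummand T s (fun x => g (u x))) ∧
        Real.sqrt (∑' l : ℤ, sobolevSummand T s (fun x => g (u x)) l)
          ≤ Real.sqrt (∑' l : ℤ, sobolevSummand T s (fun _ => g 0) l)
            + χ (⨆ x : AddCircle T, ‖u x‖)
              * Real.sqrt (∑' l : ℤ, sobolevSummand T s u l) := by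
  obtain ⟨k, hsk⟩ := exists_nat_gt s
  obtain ⟨χ, h_mono, h_nonneg, h_bound⟩ :=
    stmt13_general T (one_half_pos.trans hs) hsk (hg.of_le (mod_cast le_top))
  refine ⟨χ, h_mono, h_nonneg, fun u hu => h_bound u _ hu.aestronglyMeasurable (.of_forall ?_)⟩
  exact le_ciSup (isCompact_range hu.norm).bddAbove
end
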